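/- arXiv:1411.3415 — 3 statements merged into one kernel-verified Lean document; each statement's English description precedes it below -/
import Mathlib

section
/- For every integer N ≥ 1 there exist a real number γ with 0 < γ < 1, positive real numbers ε₁, …, ε_N, and distinct points z₁, …, z_N ∈ ℂ such that the equation conj(z) = −γ·z + Σ_{j=1}^N ε_j/(z − z_j) has exactly 5N − 1 solutions z ∈ ℂ ∖ {z₁, …, z_N}. -/
/-- The set of solutions `w ∈ ℂ ∖ {z₁, …, z_N}` of the gravitational lensing equation
`conj w = −γ·w + Σ_j ε_j/(w − z_j)`. -/
def lensSolutions (N : ℕ) (γ : ℝ) (ε : Fin N → ℝ) (z : Fin N → ℂ) : Set ℂ :=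
  {w | (∀ j, w ≠ z j) ∧
    (starRingEnd ℂ) w = -(γ : ℂ) * w + ∑ j, (ε j : ℂ) / (w - z j)}



lemma ln_rootM (N : ℕ) : ∃ x1 : ℝ, 1 < x1 ∧ ∀ x : ℝ, 1 ≤ x → (x^(N+1)*(x-4) = 4*x-1 ↔ x = x1) := by
  have hc : ContinuousOn (fun x : ℝ => x^(N+1)*(x-4) - (4*x-1)) (Set.Icc 4 8) := by fun_prop
  have h8 : (8:ℝ) ≤ 8^(N+1) := by
    have : (1:ℝ) ≤ 8^N := one_le_pow₀ (by norm_num)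
    rw [pow_succ]; linarith
  have hi := intermediate_value_Icc (by norm_num : (4:ℝ) ≤ 8) hc
  have h0 : (0:ℝ) ∈ Set.Icc ((4:ℝ)^(N+1)*(4-4) - (4*4-1)) ((8:ℝ)^(N+1)*(8-4) - (4*8-1)) := by
    constructor
    · norm_num
    · linarith
  obtain ⟨x1, hx1, hx1'⟩ := hi h0
  simp only at hx1'
  have hgt : ∀ x : ℝ, 1 ≤ x → x^(N+1)*(x-4) = 4*x-1 → 4 < x := by
    intro x hx h
    by_contra hlt
    push Not at hlt
    have : 0 ≤ x^(N+1) := by positivity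
    nlinarith
  have key : ∀ x y : ℝ, 1 ≤ x → x < y → x^(N+1)*(x-4) = 4*x-1 → y^(N+1)*(y-4) = 4*y-1 → False := by
    intro x y hx hxy h1 h2
    have hx4 := hgt x hx h1
    have hp : x^(N+1) < y^(N+1) := pow_lt_pow_left₀ hxy (by linarith) (by omega)
    have hpos : 0 < (x-4)*(y-4) := mul_pos (by linarith) (by linarith)
    have := mul_lt_mul_of_pos_right hp hpos
    have e1 : x^(N+1)*((x-4)*(y-4)) = (4*x-1)*(y-4) := by rw [← h1]; ring
    have e2 : y^(N+1)*((x-4)*(y-4)) = (4*y-1)*(x-4) := by rw [← h2]; ring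
    nlinarith
  have hx1e : x1^(N+1)*(x1-4) = 4*x1-1 := by linarith
  refine ⟨x1, by linarith [hx1.1], fun x hx => ⟨fun h => ?_, fun h => by rw [h]; exact hx1e⟩⟩
  rcases lt_trichotomy x x1 with h' | h' | h'
  · exact (key x x1 hx h' h hx1e).elim
  · exact h'
  · exact (key x1 x (by linarith [hx1.1]) h' hx1e h).elim

lemma ln_rootP (N : ℕ) (hN : 1 ≤ N) : ∃ x2 : ℝ, 1 < x2 ∧ ∀ x : ℝ, 1 ≤ x →
    (x^(N+1)*(4-x) = 4*x-1 ↔ x = 1 ∨ x = x2) := by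
  have hc : ContinuousOn (fun x : ℝ => x^(N+1)*(4-x) - (4*x-1)) (Set.Icc 2 4) := by fun_prop
  have h8 : (4:ℝ) ≤ 2^(N+1) := by
    calc (4:ℝ) = 2^(1+1) := by norm_num
      _ ≤ 2^(N+1) := pow_le_pow_right₀ (by norm_num) (by omega)
  have hi := intermediate_value_Icc' (by norm_num : (2:ℝ) ≤ 4) hc
  have h0 : (0:ℝ) ∈ Set.Icc ((4:ℝ)^(N+1)*(4-4) - (4*4-1)) ((2:ℝ)^(N+1)*(4-2) - (4*2-1)) := by
    constructor
    · norm_num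
    · linarith
  obtain ⟨x1, hx1, hx1'⟩ := hi h0
  simp only at hx1'
  have hx1e : x1^(N+1)*(4-x1) = 4*x1-1 := by linarith
  set S : ℝ → ℝ := fun x => ∑ i ∈ Finset.range N, x^(i+1) with hS
  have hSg : ∀ x, (x-1) * S x = x^(N+1) - x := by
    intro x
    have := mul_geom_sum x N
    simp only [hS, pow_succ, ← Finset.sum_mul]
    linear_combination x * this
  have hSe : ∀ x, 1 < x → x^(N+1)*(4-x) = 4*x-1 → 3 * S x = 1 + x^(N+1) := by
    intro x hx h
    have hne : x - 1 ≠ 0 := by linarith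
    apply mul_left_cancel₀ hne
    linear_combination 3 * hSg x + h
  have hSr : ∀ x, S x = ∑ i ∈ Finset.range N, x^(N-i) := by
    intro x
    rw [hS]
    simp only
    rw [← Finset.sum_range_reflect]
    apply Finset.sum_congr rfl
    intro i hi
    congr 1
    have := Finset.mem_range.1 hi
    omega
  have key : ∀ x y : ℝ, 1 < x → x < y → x^(N+1)*(4-x) = 4*x-1 → y^(N+1)*(4-y) = 4*y-1 → False := by
    intro x y hx hxy h1 h2
    have e1 := hSe x hx h1
    have e2 := hSe y (by linarith) h2
    have hlt : S y * (1 + x^(N+1)) < S x * (1 + y^(N+1)) := by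
      have l1 : S x * (1 + y^(N+1)) - S y * (1 + x^(N+1)) =
          ∑ i ∈ Finset.range N, (y^(i+1) - x^(i+1)) * ((x*y)^(N-i) - 1) := by
        have a1 : S x * (1 + y^(N+1)) - S y * (1 + x^(N+1)) = S x - S y + (∑ i ∈ Finset.range N, x^(N-i)) * y^(N+1) - (∑ i ∈ Finset.range N, y^(N-i)) * x^(N+1) := by
          rw [← hSr, ← hSr]; ring
        rw [a1]
        simp only [hS, Finset.sum_mul, ← Finset.sum_sub_distrib, ← Finset.sum_add_distrib]
        apply Finset.sum_congr rfl
        intro i hi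
        have := Finset.mem_range.1 hi
        have e : N + 1 = (N - i) + (i+1) := by omega
        rw [e, pow_add, pow_add, mul_pow]
        have e' : N - i + (i + 1) - i = N - i + 1 := by omega
        ring
      have : 0 < ∑ i ∈ Finset.range N, (y^(i+1) - x^(i+1)) * ((x*y)^(N-i) - 1) := by
        apply Finset.sum_pos
        · intro i hi
          have := Finset.mem_range.1 hi
          apply mul_pos
          · have : x^(i+1) < y^(i+1) := pow_lt_pow_left₀ hxy (by linarith) (by omega)
            linarith
          · have : 1 < (x*y)^(N-i) := one_lt_pow₀ (by nlinarith) (by omega)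
            linarith
        · exact ⟨0, Finset.mem_range.2 (by omega)⟩
      linarith
    rw [← e1, ← e2] at hlt
    nlinarith
  refine ⟨x1, by linarith [hx1.1], fun x hx => ⟨fun h => ?_, fun h => ?_⟩⟩
  · rcases hx.eq_or_lt with h1 | h1
    · exact Or.inl h1.symm
    right
    rcases lt_trichotomy x x1 with h' | h' | h'
    · exact (key x x1 h1 h' h hx1e).elim
    · exact h'
    · exact (key x1 x (by linarith [hx1.1]) h' hx1e h).elim
  · rcases h with h | h
    · rw [h]; norm_num
    · rw [h]; exact hx1e


def lnU (N : ℕ) (s : ℝ) : Set ℂ := {u | ‖u‖ = 1 ∧ u^(2*N+2)*(4-u^2) = s*(4*u^2-1)}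

lemma lnU_upper (N : ℕ) (s : ℝ) (hs : s = 1 ∨ s = -1) (x : ℝ) (hx : 1 < x)
    (h : x^(N+1)*(4-x) = s*(4*x-1)) : (lnU N s).Finite ∧ (lnU N s).ncard ≤ 2*N := by
  classical
  open Polynomial in
  set p : Polynomial ℂ := X^(2*N+2)*(4-X^2) - C (s:ℂ)*(4*X^2-1) with hp
  have hs0 : (s:ℂ) ≠ 0 := by rcases hs with h | h <;> simp [h]
  have hss : (s:ℂ)*s = 1 := by rcases hs with h | h <;> simp [h]
  have hev : ∀ u : ℂ, p.eval u = u^(2*N+2)*(4-u^2) - s*(4*u^2-1) := by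
    intro u; simp [hp]
  have hp0 : p ≠ 0 := by
    intro h0
    have := hev 0
    rw [h0] at this
    simp at this
    exact hs0 this.symm
  have hdeg : p.natDegree ≤ 2*N+4 := by
    rw [hp]
    have h1 : (Polynomial.X^(2*N+2)*(4-Polynomial.X^2) : Polynomial ℂ).natDegree ≤ 2*N+4 := by
      apply (Polynomial.natDegree_mul_le).trans
      have : (4-Polynomial.X^2 : Polynomial ℂ).natDegree ≤ 2 := by compute_degree
      simp only [Polynomial.natDegree_X_pow]
      omega
    have h2 : (Polynomial.C (s:ℂ)*(4*Polynomial.X^2-1)).natDegree ≤ 2*N+4 := by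
      have : (Polynomial.C (s:ℂ)*(4*Polynomial.X^2-1)).natDegree ≤ 2 := by compute_degree
      omega
    exact (Polynomial.natDegree_sub_le _ _).trans (max_le h1 h2)
  have hmem : ∀ u, u ∈ p.roots.toFinset ↔ u^(2*N+2)*(4-u^2) = s*(4*u^2-1) := by
    intro u
    rw [Multiset.mem_toFinset, Polynomial.mem_roots hp0, Polynomial.IsRoot, hev, sub_eq_zero]
  have hsub : lnU N s ⊆ p.roots.toFinset := by
    intro u hu
    exact (hmem u).2 hu.2
  have hfin : (lnU N s).Finite := (Finset.finite_toSet _).subset hsub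
  refine ⟨hfin, ?_⟩
  set r : ℝ := Real.sqrt x with hr
  have hr2 : r^2 = x := Real.sq_sqrt (by linarith)
  have hr1 : 1 < r := by rw [hr]; exact Real.lt_sqrt_of_sq_lt (by linarith)
  have hrC : (r:ℂ)^2 = x := by exact_mod_cast hr2
  have hr0 : (r:ℂ) ≠ 0 := by exact_mod_cast (by linarith : r ≠ 0)
  have hx0 : (x:ℂ) ≠ 0 := by exact_mod_cast (by linarith : x ≠ 0)
  have hxC : (x:ℂ)^(N+1)*(4-x) = s*(4*x-1) := by exact_mod_cast h
  have hxi : ((x:ℂ)⁻¹)^(N+1)*(4-(x:ℂ)⁻¹) = s*(4*(x:ℂ)⁻¹-1) := by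
    have hpx : (x:ℂ)^(N+1) ≠ 0 := pow_ne_zero _ hx0
    rw [inv_pow]
    field_simp
    linear_combination (-(s:ℂ)) * hxC - (4*(x:ℂ)-1) * hss
  have hsq : ∀ u : ℂ, ∀ y : ℂ, u^2 = y → y^(N+1)*(4-y) = s*(4*y-1) → u ∈ p.roots.toFinset := by
    intro u y hu hy
    rw [hmem, show 2*N+2 = 2*(N+1) by ring, pow_mul, hu]
    exact hy
  set F : Finset ℂ := {(r:ℂ), -(r:ℂ), (r:ℂ)⁻¹, -(r:ℂ)⁻¹} with hF
  have hri1 : r⁻¹ < 1 := inv_lt_one_of_one_lt₀ hr1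
  have hri0 : 0 < r⁻¹ := by positivity
  have hFc : F.card = 4 := by
    have e : F = ({r, -r, r⁻¹, -r⁻¹} : Finset ℝ).image (fun t : ℝ => (t:ℂ)) := by
      simp [hF, Finset.image_insert]
    rw [e, Finset.card_image_of_injective _ Complex.ofReal_injective]
    rw [Finset.card_insert_of_notMem, Finset.card_insert_of_notMem, Finset.card_insert_of_notMem, Finset.card_singleton]
    · simp only [Finset.mem_singleton]; intro h; linarith
    · simp only [Finset.mem_singleton, Finset.mem_insert, not_or]; constructor <;> (intro h; linarith)
    · simp only [Finset.mem_singleton, Finset.mem_insert, not_or]; refine ⟨?_, ?_, ?_⟩ <;> (intro h; linarith)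
  have hFs : F ⊆ p.roots.toFinset := by
    intro u hu
    simp only [hF, Finset.mem_insert, Finset.mem_singleton] at hu
    rcases hu with rfl | rfl | rfl | rfl
    · exact hsq _ _ hrC hxC
    · exact hsq _ _ (by rw [neg_sq, hrC]) hxC
    · exact hsq _ _ (by rw [inv_pow, hrC]) hxi
    · exact hsq _ _ (by rw [neg_sq, inv_pow, hrC]) hxi
  have hFn : ∀ u ∈ F, ‖u‖ ≠ 1 := by
    intro u hu
    have hrr : ‖(r:ℂ)‖ = r := by rw [Complex.norm_real, Real.norm_of_nonneg (by linarith)]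
    simp only [hF, Finset.mem_insert, Finset.mem_singleton] at hu
    rcases hu with rfl | rfl | rfl | rfl
    · rw [hrr]; linarith
    · rw [norm_neg, hrr]; linarith
    · rw [norm_inv, hrr]; linarith
    · rw [norm_neg, norm_inv, hrr]; linarith
  have hU : hfin.toFinset ∪ F ⊆ p.roots.toFinset := by
    apply Finset.union_subset _ hFs
    intro u hu
    exact hsub (hfin.mem_toFinset.1 hu)
  have hd : Disjoint hfin.toFinset F := by
    rw [Finset.disjoint_left]
    intro u hu hu'
    exact hFn u hu' (hfin.mem_toFinset.1 hu).1
  have hc := Finset.card_le_card hU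
  rw [Finset.card_union_of_disjoint hd, hFc] at hc
  have h1 := p.roots.toFinset_card_le
  have h2 := p.card_roots'
  rw [Set.ncard_eq_toFinset_card _ hfin]
  omega

lemma ln_ivt (g : ℝ → ℝ) (hg : Continuous g) (a : ℕ → ℝ) (ha : StrictMono a) (K : ℕ)
    (h : ∀ k ≤ K, 0 < (-1:ℝ)^k * g (a k)) :
    ∃ c : Fin K → ℝ, Function.Injective c ∧ ∀ k, a 0 < c k ∧ c k < a K ∧ g (c k) = 0 := by
  have h1 : ∀ k : Fin K, ∃ c, a k < c ∧ c < a (k+1) ∧ g c = 0 := by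
    intro k
    have ha' : a k < a (k+1) := ha (by omega)
    have hk := h k k.2.le
    have hk1 := h (k+1) k.2
    have hc : ContinuousOn (fun x => (-1:ℝ)^(k:ℕ) * g x) (Set.Icc (a k) (a (k+1))) := by fun_prop
    have hi := intermediate_value_Ioo' ha'.le hc
    have : (0:ℝ) ∈ Set.Ioo ((-1:ℝ)^(k:ℕ) * g (a (k+1))) ((-1:ℝ)^(k:ℕ) * g (a k)) := by
      refine ⟨?_, hk⟩
      rw [pow_succ] at hk1
      linarith
    obtain ⟨c, hc1, hc2⟩ := hi this
    refine ⟨c, hc1.1, hc1.2, ?_⟩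
    simpa using hc2
  choose c hc1 hc2 hc3 using h1
  have hm : StrictMono c := by
    intro i j hij
    have : a (i+1) ≤ a j := ha.monotone (by exact hij)
    linarith [hc2 i, hc1 j]
  refine ⟨c, hm.injective, fun k => ⟨?_, ?_, hc3 k⟩⟩
  · exact lt_of_le_of_lt (ha.monotone (Nat.zero_le _)) (hc1 k)
  · exact lt_of_lt_of_le (hc2 k) (ha.monotone (by omega))

lemma ln_lower_aux (N : ℕ) (s : ℝ) (hfin : (lnU N s).Finite) (K : ℕ) (c : Fin K → ℝ)
    (hc : Function.Injective c) (h : ∀ k, 0 < c k ∧ c k < Real.pi ∧ Complex.exp (c k * Complex.I) ∈ lnU N s) :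
    K ≤ {u ∈ lnU N s | 0 < u.im}.ncard := by
  set f : Fin K → ℂ := fun k => Complex.exp (c k * Complex.I) with hf
  have hinj : Function.Injective f := by
    intro i j hij
    apply hc
    have := congrArg Complex.re hij
    simp only [hf, Complex.exp_ofReal_mul_I_re] at this
    exact Real.injOn_cos ⟨(h i).1.le, (h i).2.1.le⟩ ⟨(h j).1.le, (h j).2.1.le⟩ this
  have hsub : Set.range f ⊆ {u ∈ lnU N s | 0 < u.im} := by
    rintro _ ⟨k, rfl⟩
    refine ⟨(h k).2.2, ?_⟩
    simp only [hf, Complex.exp_ofReal_mul_I_im]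
    exact Real.sin_pos_of_pos_of_lt_pi (h k).1 (h k).2.1
  have := Set.ncard_le_ncard hsub (hfin.subset (fun u hu => hu.1))
  rwa [← Set.image_univ, Set.ncard_image_of_injective _ hinj, Set.ncard_univ, Nat.card_eq_fintype_card, Fintype.card_fin] at this

lemma ln_mem_exp (N : ℕ) (a : ℝ) : 
    (Complex.exp (a * Complex.I))^(2*N+2)*(4-(Complex.exp (a * Complex.I))^2)
      = (Complex.exp (a * Complex.I))^(N+2) * (4 * Complex.exp ((N*a:ℝ) * Complex.I) - Complex.exp (((N+2)*a:ℝ) * Complex.I))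
    ∧ (4*(Complex.exp (a * Complex.I))^2-1)
      = (Complex.exp (a * Complex.I))^(N+2) * (4 * Complex.exp (-((N*a:ℝ)) * Complex.I) - Complex.exp (-(((N+2)*a:ℝ)) * Complex.I)) := by
  constructor
  · simp only [mul_sub, ← Complex.exp_nat_mul, mul_left_comm _ (4:ℂ), mul_comm _ (4:ℂ), ← Complex.exp_add]
    congr 2
    · congr 1; push_cast; ring
    · push_cast; ring
  · simp only [mul_sub, ← Complex.exp_nat_mul, mul_left_comm _ (4:ℂ), ← Complex.exp_add]
    congr 2
    · congr 1; push_cast; ring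
    · rw [← Complex.exp_zero]; congr 1; push_cast; ring


lemma ln_memM (N : ℕ) (a : ℝ) (h : 4*Real.cos (N*a) - Real.cos ((N+2)*a) = 0) :
    Complex.exp (a * Complex.I) ∈ lnU N (-1) := by
  refine ⟨Complex.norm_exp_ofReal_mul_I a, ?_⟩
  obtain ⟨h1, h2⟩ := ln_mem_exp N a
  have hC : 4*Complex.cos ((N*a:ℝ):ℂ) - Complex.cos (((N+2)*a:ℝ):ℂ) = 0 := by exact_mod_cast h
  rw [h1, h2]
  rw [Complex.cos, Complex.cos] at hC
  push_cast at hC ⊢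
  linear_combination 2 * Complex.exp (a * Complex.I)^(N+2) * hC

lemma ln_memP (N : ℕ) (a : ℝ) (h : 4*Real.sin (N*a) - Real.sin ((N+2)*a) = 0) :
    Complex.exp (a * Complex.I) ∈ lnU N 1 := by
  refine ⟨Complex.norm_exp_ofReal_mul_I a, ?_⟩
  obtain ⟨h1, h2⟩ := ln_mem_exp N a
  have hC : 4*Complex.sin ((N*a:ℝ):ℂ) - Complex.sin (((N+2)*a:ℝ):ℂ) = 0 := by exact_mod_cast h
  rw [h1, h2]
  rw [Complex.sin, Complex.sin] at hC
  push_cast at hC ⊢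
  linear_combination (2 * Complex.I) * Complex.exp (a * Complex.I)^(N+2) * hC - Complex.exp (a * Complex.I)^(N+2) * (4 * Complex.exp (-(N*a) * Complex.I) - 4*Complex.exp ((N*a) * Complex.I)- Complex.exp (-((N+2)*a) * Complex.I)+Complex.exp (((N+2)*a) * Complex.I)) * Complex.I_sq

lemma ln_lowM (N : ℕ) (hN : 1 ≤ N) (hfin : (lnU N (-1)).Finite) :
    N ≤ {u ∈ lnU N (-1) | 0 < u.im}.ncard := by
  have hN0 : (0:ℝ) < N := by exact_mod_cast hN
  obtain ⟨c, hc, h⟩ := ln_ivt (fun a => 4*Real.cos (N*a) - Real.cos ((N+2)*a)) (by fun_prop)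
    (fun k => k*Real.pi/N) (by
      intro i j hij
      have : (i:ℝ) < j := by exact_mod_cast hij
      show (i:ℝ)*Real.pi/N < j*Real.pi/N
      have := Real.pi_pos
      gcongr) N (by
      intro k hk
      have e : (N:ℝ)*(k*Real.pi/N) = k*Real.pi := by field_simp
      rw [e, Real.cos_nat_mul_pi]
      have h1 := Real.abs_cos_le_one ((N+2)*(k*Real.pi/N))
      have h2 := abs_le.1 h1
      rcases neg_one_pow_eq_or ℝ k with h | h <;> rw [h] <;> linarith)
  refine ln_lower_aux N (-1) hfin N c hc (fun k => ?_)
  obtain ⟨h1, h2, h3⟩ := h k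
  refine ⟨by simpa using h1, ?_, ln_memM N _ h3⟩
  rwa [mul_div_assoc, mul_div_cancel₀] at h2
  exact hN0.ne'

lemma ln_lowP (N : ℕ) (hN : 1 ≤ N) (hfin : (lnU N 1).Finite) :
    N - 1 ≤ {u ∈ lnU N 1 | 0 < u.im}.ncard := by
  have hN0 : (0:ℝ) < N := by exact_mod_cast hN
  have hpi := Real.pi_pos
  obtain ⟨c, hc, h⟩ := ln_ivt (fun a => 4*Real.sin (N*a) - Real.sin ((N+2)*a)) (by fun_prop)
    (fun k => (k*Real.pi+Real.pi/2)/N) (by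
      intro i j hij
      have : (i:ℝ) < j := by exact_mod_cast hij
      show ((i:ℝ)*Real.pi+Real.pi/2)/N < (j*Real.pi+Real.pi/2)/N
      gcongr) (N-1) (by
      intro k hk
      have e : (N:ℝ)*((k*Real.pi+Real.pi/2)/N) = k*Real.pi+Real.pi/2 := by field_simp
      rw [e, Real.sin_add_pi_div_two, Real.cos_nat_mul_pi]
      have h1 := Real.abs_sin_le_one ((N+2)*((k*Real.pi+Real.pi/2)/N))
      have h2 := abs_le.1 h1
      rcases neg_one_pow_eq_or ℝ k with h | h <;> rw [h] <;> linarith)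
  refine ln_lower_aux N 1 hfin (N-1) c hc (fun k => ?_)
  obtain ⟨h1, h2, h3⟩ := h k
  refine ⟨lt_trans (by positivity) h1, lt_trans h2 ?_, ln_memP N _ h3⟩
  rw [div_lt_iff₀ hN0, Nat.cast_sub hN]
  push_cast
  nlinarith

lemma ln_split (N : ℕ) (s : ℝ) (hfin : (lnU N s).Finite) :
    (lnU N s).ncard = 2 * {u ∈ lnU N s | 0 < u.im}.ncard + {u ∈ lnU N s | u.im = 0}.ncard := by
  have hconj : ∀ u ∈ lnU N s, (starRingEnd ℂ) u ∈ lnU N s := by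
    intro u hu
    refine ⟨by simpa using hu.1, ?_⟩
    have := congrArg (starRingEnd ℂ) hu.2
    have h4 : (starRingEnd ℂ) 4 = 4 := Complex.conj_ofNat 4
    simpa [h4] using this
  have e1 : {u ∈ lnU N s | u.im < 0} = (starRingEnd ℂ) '' {u ∈ lnU N s | 0 < u.im} := by
    ext u
    constructor
    · rintro ⟨h1, h2⟩
      exact ⟨(starRingEnd ℂ) u, ⟨hconj u h1, by simpa using h2⟩, by simp⟩
    · rintro ⟨v, ⟨h1, h2⟩, rfl⟩
      exact ⟨hconj v h1, by simpa using h2⟩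
  have e2 : {u ∈ lnU N s | u.im < 0}.ncard = {u ∈ lnU N s | 0 < u.im}.ncard := by
    rw [e1, Set.ncard_image_of_injective _ (starRingEnd ℂ).injective]
  have e3 : lnU N s = ({u ∈ lnU N s | 0 < u.im} ∪ {u ∈ lnU N s | u.im < 0}) ∪ {u ∈ lnU N s | u.im = 0} := by
    ext u
    simp only [Set.mem_union, Set.mem_sep_iff]
    have := lt_trichotomy u.im 0
    tauto
  have f : ∀ P : ℂ → Prop, {u ∈ lnU N s | P u}.Finite := fun P => hfin.subset (fun u hu => hu.1)
  conv_lhs => rw [e3]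
  rw [Set.ncard_union_eq _ ((f _).union (f _)) (f _), Set.ncard_union_eq _ (f _) (f _), e2]
  · ring
  · rw [Set.disjoint_left]; rintro u ⟨_, h⟩ ⟨_, h'⟩; linarith
  · rw [Set.disjoint_left]; rintro u (⟨_, h⟩ | ⟨_, h⟩) ⟨_, h'⟩ <;> linarith

lemma ln_cardM (N : ℕ) (hN : 1 ≤ N) : (lnU N (-1)).Finite ∧ (lnU N (-1)).ncard = 2*N := by
  obtain ⟨x, hx, h⟩ := ln_rootM N
  have hx' := (h x hx.le).2 rfl
  obtain ⟨h1, h2⟩ := lnU_upper N (-1) (Or.inr rfl) x hx (by linarith)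
  refine ⟨h1, ?_⟩
  have := ln_split N (-1) h1
  have := ln_lowM N hN h1
  omega

lemma ln_cardP (N : ℕ) (hN : 1 ≤ N) : (lnU N 1).Finite ∧ (lnU N 1).ncard = 2*N ∧
    {u ∈ lnU N 1 | 0 < u.im}.ncard = N - 1 := by
  obtain ⟨x, hx, h⟩ := ln_rootP N hN
  have hx' := (h x hx.le).2 (Or.inr rfl)
  obtain ⟨h1, h2⟩ := lnU_upper N 1 (Or.inl rfl) x hx (by linarith)
  have a1 := ln_split N 1 h1
  have a2 := ln_lowP N hN h1
  have a3 : ({1, -1} : Set ℂ).ncard ≤ {u ∈ lnU N 1 | u.im = 0}.ncard := by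
    apply Set.ncard_le_ncard _ (h1.subset (fun u hu => hu.1))
    rintro u (rfl | rfl)
    · refine ⟨⟨by simp, ?_⟩, by simp⟩
      norm_num
    · refine ⟨⟨by simp, ?_⟩, by simp⟩
      rw [show 2*N+2 = 2*(N+1) by ring, pow_mul]
      norm_num
  rw [Set.ncard_pair (by norm_num)] at a3
  refine ⟨h1, ?_, ?_⟩ <;> omega


lemma ln_S0 (m : ℕ) (hm : 2 ≤ m) (μ ζ : ℂ) (hμ : IsPrimitiveRoot μ m) (hZ : ζ^m ≠ 1) :
    ∑ k ∈ Finset.range m, 1/(ζ - μ^k) = m * ζ^(m-1)/(ζ^m-1) := by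
  have hZ' : ζ^m - 1 ≠ 0 := sub_ne_zero.2 hZ
  have hym : ∀ k, (μ^k)^m = 1 := by intro k; rw [← pow_mul, mul_comm, pow_mul, hμ.pow_eq_one, one_pow]
  have hne : ∀ k, ζ - μ^k ≠ 0 := by
    intro k h
    apply hZ
    rw [sub_eq_zero.1 h, hym]
  have h1 : ∀ k, 1/(ζ - μ^k) = (∑ l ∈ Finset.range m, ζ^l * (μ^k)^(m-1-l)) / (ζ^m-1) := by
    intro k
    rw [div_eq_div_iff (hne k) hZ', (Commute.all ζ (μ^k)).geom_sum₂_mul, hym, one_mul]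
  simp_rw [h1]
  rw [← Finset.sum_div, Finset.sum_comm]
  congr 1
  rw [Finset.sum_eq_single (m-1)]
  · simp
  · intro l hl hl'
    rw [← Finset.mul_sum]
    have hl2 := Finset.mem_range.1 hl
    have e : ∀ k, (μ^k)^(m-1-l) = (μ^(m-1-l))^k := by intro k; rw [← pow_mul, ← pow_mul, mul_comm]
    simp_rw [e]
    have hq : μ^(m-1-l) ≠ 1 := hμ.pow_ne_one_of_pos_of_lt (by omega) (by omega)
    have := mul_geom_sum (μ^(m-1-l)) m
    rw [hym, sub_self] at this
    rcases mul_eq_zero.1 this with h | h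
    · exact absurd (sub_eq_zero.1 h) hq
    · rw [h, mul_zero]
  · intro h; exact absurd (Finset.mem_range.2 (by omega)) h

lemma ln_S1 (m : ℕ) (hm : 2 ≤ m) (μ ζ : ℂ) (h0 : ζ ≠ 0) (hμ : IsPrimitiveRoot μ m) (hZ : ζ^m ≠ 1) :
    ∑ k ∈ Finset.range m, (μ^k - (μ^k)⁻¹)/(ζ - μ^k) = m*((ζ-ζ⁻¹)*(ζ^(m-1)/(ζ^m-1)) - 1) := by
  have hμ0 : μ ≠ 0 := hμ.ne_zero (by omega)
  have hym : ∀ k, (μ^k)^m = 1 := by intro k; rw [← pow_mul, mul_comm, pow_mul, hμ.pow_eq_one, one_pow]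
  have hne : ∀ k, ζ - μ^k ≠ 0 := by
    intro k h
    apply hZ
    rw [sub_eq_zero.1 h, hym]
  have h1 : ∀ k, (μ^k - (μ^k)⁻¹)/(ζ - μ^k) = (ζ-ζ⁻¹)*(1/(ζ-μ^k)) - 1 - ζ⁻¹ * (μ⁻¹)^k := by
    intro k
    have := hne k
    have h2 : μ^k ≠ 0 := pow_ne_zero _ hμ0
    rw [inv_pow]
    field_simp
    ring
  simp_rw [h1]
  rw [Finset.sum_sub_distrib, Finset.sum_sub_distrib, ← Finset.mul_sum, ← Finset.mul_sum,
    ln_S0 m hm μ ζ hμ hZ, hμ.inv.geom_sum_eq_zero (by omega)]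
  simp
  ring

lemma ln_S2 (N : ℕ) (hN : 1 ≤ N) (μ ζ : ℂ) (h0 : ζ ≠ 0) (hμ : IsPrimitiveRoot μ (2*N+2)) (hZ : ζ^(2*N+2) ≠ 1) :
    ∑ k ∈ Finset.range N, (-(μ^(k+1) - (μ^(k+1))⁻¹)^2/4)/(ζ+ζ⁻¹ - (μ^(k+1)+(μ^(k+1))⁻¹))
      = (N+1)/4*(2*ζ⁻¹ - 2*(ζ-ζ⁻¹)/(ζ^(2*N+2)-1)) := by
  set m := 2*N+2 with hm
  have hZ' : ζ^m - 1 ≠ 0 := sub_ne_zero.2 hZ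
  have hμ0 : μ ≠ 0 := hμ.ne_zero (by omega)
  set g : ℂ → ℂ := fun y => (-(y - y⁻¹)^2/4)/(ζ+ζ⁻¹ - (y+y⁻¹)) with hg
  have hginv : ∀ y, g y⁻¹ = g y := by
    intro y; simp only [hg, inv_inv]; congr 1
    · ring
    · ring
  have hym : ∀ k, (μ^k)^m = 1 := by intro k; rw [← pow_mul, mul_comm, pow_mul, hμ.pow_eq_one, one_pow]
  have hne : ∀ k, ζ - μ^k ≠ 0 := by
    intro k h
    apply hZ
    rw [sub_eq_zero.1 h, hym]
  have hne' : ∀ k, ζ - (μ⁻¹)^k ≠ 0 := by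
    intro k h
    apply hZ
    rw [sub_eq_zero.1 h, inv_pow, inv_pow, hym, inv_one]
  have hgs : ∀ k, g (μ^k) = -(ζ/4)*((μ^k - (μ^k)⁻¹)/(ζ - μ^k) + ((μ⁻¹)^k - ((μ⁻¹)^k)⁻¹)/(ζ - (μ⁻¹)^k)) := by
    intro k
    have e1 := hne k
    have e2 := hne' k
    have h2 : μ^k ≠ 0 := pow_ne_zero _ hμ0
    rw [inv_pow] at e2 ⊢
    rw [inv_inv]
    simp only [hg]
    generalize μ^k = y at *
    have e3 : ζ + ζ⁻¹ - (y+y⁻¹) = (ζ-y)*(ζ-y⁻¹)/ζ := by field_simp; ring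
    rw [e3, div_add_div _ _ e1 e2, div_div_eq_mul_div, ← mul_div_assoc]
    congr 1
    field_simp
    ring
  have hA : ∑ k ∈ Finset.range m, g (μ^k) = -(ζ/2)*(m*((ζ-ζ⁻¹)*(ζ^(m-1)/(ζ^m-1)) - 1)) := by
    simp_rw [hgs]
    rw [← Finset.mul_sum, Finset.sum_add_distrib, ln_S1 m (by omega) μ ζ h0 hμ hZ, ln_S1 m (by omega) μ⁻¹ ζ h0 hμ.inv hZ]
    ring
  have hmn : μ^(N+1) = -1 := by
    have h1 : (μ^(N+1))^2 = 1 := by rw [← pow_mul]; rw [show (N+1)*2 = m by omega]; exact hμ.pow_eq_one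
    rcases (by simpa using h1 : μ^(N+1) = 1 ∨ μ^(N+1) = -1) with h | h
    · exact absurd h (hμ.pow_ne_one_of_pos_of_lt (by omega) (by omega))
    · exact h
  have hB : ∑ k ∈ Finset.range m, g (μ^k) = 2 * ∑ k ∈ Finset.range N, g (μ^(k+1)) := by
    rw [show m = (N+1)+(N+1) by omega, Finset.sum_range_add, Finset.sum_range_succ', Finset.sum_range_succ' (fun k => g (μ^(N+1+k)))]
    have z1 : g (μ^0) = 0 := by simp [hg]
    have z2 : g (μ^(N+1+0)) = 0 := by rw [add_zero, hmn]; norm_num [hg]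
    rw [z1, z2, ← Finset.sum_range_reflect (fun k => g (μ^(N+1+(k+1)))), add_zero, add_zero, two_mul]
    congr 1
    apply Finset.sum_congr rfl
    intro k hk
    have hk' := Finset.mem_range.1 hk
    rw [← hginv]
    congr 1
    rw [inv_eq_iff_eq_inv, eq_comm]
    apply inv_eq_of_mul_eq_one_left
    rw [← pow_add, show N+1+(N-1-k+1)+(k+1) = m by omega, hμ.pow_eq_one]
  have hC : ζ^m = ζ*ζ^(m-1) := by rw [← pow_succ']; congr 1
  have hm' : (m:ℂ) = 2*(N+1) := by rw [hm]; push_cast; ring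
  have hfin : ∑ k ∈ Finset.range N, g (μ^(k+1)) = -(ζ/4)*(m*((ζ-ζ⁻¹)*(ζ^(m-1)/(ζ^m-1)) - 1)) := by
    linear_combination (1/2)*hA - (1/2)*hB
  show ∑ k ∈ Finset.range N, g (μ^(k+1)) = _
  rw [hfin, hm']
  rw [hC] at hZ' ⊢
  generalize ζ^(m-1) = q at *
  field_simp
  ring

lemma ln_pf (N : ℕ) (hN : 1 ≤ N) (ζ : ℂ) (h0 : ζ ≠ 0) (hZ : ζ^(2*N+2) ≠ 1) :
    ∑ j : Fin N, (((15/8)*(4/(N+1))*Real.sin (((j:ℕ)+1)*Real.pi/(N+1))^2 : ℝ):ℂ)/(ζ+ζ⁻¹ - (2*Real.cos (((j:ℕ)+1)*Real.pi/(N+1)) : ℝ))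
      = 15/4*(ζ⁻¹ - (ζ-ζ⁻¹)/(ζ^(2*N+2)-1)) := by
  have hμ := Complex.isPrimitiveRoot_exp (2*N+2) (by omega)
  have h := ln_S2 N hN _ ζ h0 hμ hZ
  rw [Fin.sum_univ_eq_sum_range (fun j => (((15/8)*(4/(N+1))*Real.sin (((j:ℕ)+1)*Real.pi/(N+1))^2 : ℝ):ℂ)/(ζ+ζ⁻¹ - (2*Real.cos (((j:ℕ)+1)*Real.pi/(N+1)) : ℝ)))]
  have hN0 : (N:ℂ)+1 ≠ 0 := by exact_mod_cast Nat.succ_ne_zero N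
  have e : (15/4*(ζ⁻¹ - (ζ-ζ⁻¹)/(ζ^(2*N+2)-1)) : ℂ) = (15/2)/(N+1) * ((N+1)/4*(2*ζ⁻¹ - 2*(ζ-ζ⁻¹)/(ζ^(2*N+2)-1))) := by
    field_simp
  rw [e, ← h, Finset.mul_sum]
  apply Finset.sum_congr rfl
  intro k hk
  set θ : ℝ := ((k:ℕ)+1)*Real.pi/(N+1) with hθ
  have hy : Complex.exp (2*Real.pi*Complex.I/((2*N+2:ℕ):ℂ))^(k+1) = Complex.exp (θ*Complex.I) := by
    rw [← Complex.exp_nat_mul, hθ]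
    congr 1
    push_cast
    field_simp
  rw [hy, ← Complex.exp_neg, mul_div_assoc']
  have e1 : Complex.exp (θ*Complex.I) = Complex.cos θ + Complex.sin θ * Complex.I := Complex.exp_mul_I _
  have e2 : Complex.exp (-(θ*Complex.I)) = Complex.cos θ - Complex.sin θ * Complex.I := by
    rw [← neg_mul, Complex.exp_mul_I, Complex.cos_neg, Complex.sin_neg]; ring
  rw [e1, e2]
  congr 1
  · push_cast
    field_simp
    ring_nf
    rw [Complex.I_sq]
    ring


noncomputable def lnTh (N : ℕ) (j : Fin N) : ℝ := ((j:ℕ)+1)*Real.pi/(N+1)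
noncomputable def lnEps (N : ℕ) (j : Fin N) : ℝ := (15/8)*(4/(N+1))*Real.sin (lnTh N j)^2
noncomputable def lnT (N : ℕ) (j : Fin N) : ℝ := 2*Real.cos (lnTh N j)

def lnSol (N : ℕ) : Set ℂ := {w | (∀ j, w ≠ (lnT N j : ℂ)) ∧
  (starRingEnd ℂ) w = w/4 + ∑ j, (lnEps N j : ℂ)/(w - lnT N j)}

lemma lnTh_mem (N : ℕ) (j : Fin N) : 0 < lnTh N j ∧ lnTh N j < Real.pi := by
  have hpi := Real.pi_pos
  have hj : ((j:ℕ):ℝ) + 1 < N + 1 := by exact_mod_cast Nat.succ_lt_succ j.2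
  unfold lnTh
  refine ⟨by positivity, ?_⟩
  rw [div_lt_iff₀ (by positivity)]
  nlinarith

lemma lnT_inj (N : ℕ) : Function.Injective (lnT N) := by
  intro i j h
  have h1 : Real.cos (lnTh N i) = Real.cos (lnTh N j) := by simpa [lnT] using h
  have h2 := Real.injOn_cos ⟨(lnTh_mem N i).1.le, (lnTh_mem N i).2.le⟩ ⟨(lnTh_mem N j).1.le, (lnTh_mem N j).2.le⟩ h1
  unfold lnTh at h2
  have hpi := Real.pi_pos
  field_simp at h2
  ext
  have : ((i:ℕ):ℝ) = (j:ℕ) := by linarith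
  exact_mod_cast this

lemma lnEps_pos (N : ℕ) (j : Fin N) : 0 < lnEps N j := by
  have := Real.sin_pos_of_pos_of_lt_pi (lnTh_mem N j).1 (lnTh_mem N j).2
  unfold lnEps
  positivity

lemma ln_notpole (N : ℕ) (ζ : ℂ) (h0 : ζ ≠ 0) (hZ : ζ^(2*N+2) ≠ 1) (j : Fin N) :
    ζ + ζ⁻¹ ≠ (lnT N j : ℂ) := by
  intro h
  set ω := Complex.exp (lnTh N j * Complex.I) with hω
  have hω0 : ω ≠ 0 := Complex.exp_ne_zero _
  have hωm : ω^(2*N+2) = 1 := by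
    rw [hω, ← Complex.exp_nat_mul, Complex.exp_eq_one_iff]
    refine ⟨(j:ℕ)+1, ?_⟩
    have hN0 : (N:ℂ)+1 ≠ 0 := by exact_mod_cast Nat.succ_ne_zero N
    unfold lnTh
    push_cast
    field_simp
  have ht : (lnT N j : ℂ) = ω + ω⁻¹ := by
    rw [hω, ← Complex.exp_neg, ← neg_mul, lnT, Complex.ofReal_mul, Complex.ofReal_cos, Complex.cos]
    push_cast; ring
  rw [ht] at h
  have : (ζ-ω)*(ζ-ω⁻¹) = 0 := by
    have e : (ζ-ω)*(ζ-ω⁻¹) = ζ*(ζ+ζ⁻¹-(ω+ω⁻¹)) := by field_simp; ring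
    rw [e, h]; ring
  rcases mul_eq_zero.1 this with h | h
  · exact hZ (by rw [sub_eq_zero.1 h, hωm])
  · exact hZ (by rw [sub_eq_zero.1 h, inv_pow, hωm, inv_one])

lemma ln_eqv (N : ℕ) (hN : 1 ≤ N) (ζ : ℂ) (h0 : ζ ≠ 0) (hZ : ζ^(2*N+2) ≠ 1) :
    ζ + ζ⁻¹ ∈ lnSol N ↔ ζ^(2*N+2)*(4*(starRingEnd ℂ) ζ - ζ)*(ζ*(starRingEnd ℂ) ζ - 4)
      = ((starRingEnd ℂ) ζ - 4*ζ)*(4*(ζ*(starRingEnd ℂ) ζ)-1) := by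
  have hp := ln_pf N hN ζ h0 hZ
  have hs : ∑ j, (lnEps N j : ℂ)/(ζ+ζ⁻¹ - lnT N j) = 15/4*(ζ⁻¹ - (ζ-ζ⁻¹)/(ζ^(2*N+2)-1)) := hp
  have hZ' : ζ^(2*N+2) - 1 ≠ 0 := sub_ne_zero.2 hZ
  have hc : (starRingEnd ℂ) ζ ≠ 0 := by simpa using h0
  have e : ζ + ζ⁻¹ ∈ lnSol N ↔ (starRingEnd ℂ) (ζ + ζ⁻¹) = (ζ+ζ⁻¹)/4 + ∑ j, (lnEps N j : ℂ)/(ζ+ζ⁻¹ - lnT N j) :=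
    ⟨fun h => h.2, fun h => ⟨ln_notpole N ζ h0 hZ, h⟩⟩
  rw [e, hs, map_add, map_inv₀]
  generalize (starRingEnd ℂ) ζ = c at *
  generalize ζ^(2*N+2) = Z at *
  have key : (c + c⁻¹ - ((ζ+ζ⁻¹)/4 + 15/4*(ζ⁻¹ - (ζ-ζ⁻¹)/(Z-1)))) * (4*ζ*c*(Z-1)) =
     Z*(4*c - ζ)*(ζ*c - 4) - (c - 4*ζ)*(4*(ζ*c)-1) := by
    field_simp
    ring
  have hne : 4*ζ*c*(Z-1) ≠ 0 := by simp [h0, hc, hZ']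
  rw [← sub_eq_zero, ← sub_eq_zero (b := (c - 4*ζ)*(4*(ζ*c)-1)), ← key]
  simp [hne]

lemma ln_polar (N : ℕ) (r : ℝ) (hr : 1 ≤ r) (u : ℂ) (hu : ‖u‖ = 1) :
    ((r*u)^(2*N+2)*(4*(starRingEnd ℂ) (r*u) - (r*u))*((r*u)*(starRingEnd ℂ) (r*u) - 4)
      = ((starRingEnd ℂ) (r*u) - 4*(r*u))*(4*((r*u)*(starRingEnd ℂ) (r*u))-1))
    ↔ ((r^2)^(N+1)*(4-r^2) = 4*r^2-1 ∧ u ∈ lnU N 1) ∨ ((r^2)^(N+1)*(r^2-4) = 4*r^2-1 ∧ u ∈ lnU N (-1)) := by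
  have hr0 : (r:ℂ) ≠ 0 := by exact_mod_cast (by linarith : r ≠ 0)
  have hu0 : u ≠ 0 := by intro h; simp [h] at hu
  have huu : u * (starRingEnd ℂ) u = 1 := by rw [Complex.mul_conj']; simp [hu]
  set x : ℝ := r^2 with hx
  have hx1 : 1 ≤ x := by nlinarith
  have h4x : 0 < 4*x-1 := by linarith
  have h4xC : (4*(x:ℂ)-1) ≠ 0 := by exact_mod_cast h4x.ne'
  have hxC : (x:ℂ) = r^2 := by rw [hx]; push_cast; ring
  have hn : ‖4-u^2‖ = ‖4*u^2-1‖ := by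
    have h1 : 4*u^2-1 = u^2 * (starRingEnd ℂ) (4-u^2) := by
      have h4 : (starRingEnd ℂ) 4 = 4 := Complex.conj_ofNat 4
      rw [map_sub, map_pow, h4]
      linear_combination ((u*(starRingEnd ℂ) u) + 1) * huu
    rw [h1, norm_mul, norm_pow, hu, Complex.norm_conj]; ring
  have hn0 : ‖4-u^2‖ ≠ 0 := by
    intro h
    have h1 := sub_eq_zero.1 (norm_eq_zero.1 h)
    have h2 := congrArg norm h1
    rw [norm_pow, hu] at h2
    norm_num at h2
  have e1 : ((r*u)^(2*N+2)*(4*(starRingEnd ℂ) (r*u) - (r*u))*((r*u)*(starRingEnd ℂ) (r*u) - 4)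
      = ((starRingEnd ℂ) (r*u) - 4*(r*u))*(4*((r*u)*(starRingEnd ℂ) (r*u))-1))
    ↔ ((x^(N+1)*(4-x) : ℝ):ℂ) * (u^(2*N+2)*(4-u^2)) = ((4*x-1 : ℝ):ℂ)*(4*u^2-1) := by
    rw [map_mul, Complex.conj_ofReal]
    have hp : (r:ℂ)^(2*N+2) = (x:ℂ)^(N+1) := by rw [hxC, ← pow_mul]; congr 1
    have hrr : (r*u)*(r*(starRingEnd ℂ) u) = (x:ℂ) := by rw [hxC]; linear_combination (r:ℂ)^2*huu
    rw [hrr, mul_pow, hp]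
    push_cast
    generalize (starRingEnd ℂ) u = c at *
    generalize u^(2*N+2) = V at *
    generalize (x:ℂ)^(N+1) = Q at *
    have hru : (r:ℂ)*c ≠ 0 := by
      refine mul_ne_zero hr0 ?_
      rintro rfl; simp at huu
    constructor
    · intro h
      apply mul_left_cancel₀ hru
      linear_combination -h + (-(r*4*(x:ℂ)*u*4) + (r:ℂ)*(Q*(4-x)*V)*(-u) +4*r*u) * huu
    · intro h
      linear_combination (-(r:ℂ)*c)*h + (-(r*4*(x:ℂ)*u*4) + (r:ℂ)*(Q*(4-x)*V)*(-u) +4*r*u) * huu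
  rw [e1]
  constructor
  · intro h
    have h2 := congrArg norm h
    rw [norm_mul, norm_mul, norm_mul, norm_pow, hu, ← hn, one_pow, one_mul] at h2
    have h3 := mul_right_cancel₀ hn0 h2
    rw [Complex.norm_real, Complex.norm_real, Real.norm_eq_abs, Real.norm_eq_abs, abs_of_pos h4x] at h3
    rcases eq_or_eq_neg_of_abs_eq h3 with h4 | h4
    · left
      refine ⟨h4, hu, ?_⟩
      rw [h4] at h
      push_cast at h ⊢
      rw [one_mul]
      exact mul_left_cancel₀ h4xC h
    · right
      refine ⟨by linarith, hu, ?_⟩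
      rw [h4] at h
      push_cast at h ⊢
      apply mul_left_cancel₀ h4xC
      linear_combination -h
  · rintro (⟨h1, -, h2⟩ | ⟨h1, -, h2⟩)
    · rw [h1, h2]; push_cast; ring
    · rw [show x^(N+1)*(4-x) = -(4*x-1) by linarith, h2]; push_cast; ring

lemma ln_sumcos (N : ℕ) : ∑ j : Fin N, Real.cos (lnTh N j) = 0 := by
  have h : ∑ j : Fin N, Real.cos (lnTh N j) = ∑ j : Fin N, -Real.cos (lnTh N j) := by
    rw [← Equiv.sum_comp Fin.revPerm]
    apply Finset.sum_congr rfl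
    intro j _
    rw [← Real.cos_pi_sub]
    congr 1
    unfold lnTh
    rw [Fin.revPerm_apply, Fin.val_rev, Nat.cast_sub (by omega)]
    push_cast
    field_simp
    ring
  rw [Finset.sum_neg_distrib] at h
  linarith

lemma ln_two (N : ℕ) (hN : 1 ≤ N) (σ : ℝ) (hσ : σ = 1 ∨ σ = -1) : ((2*σ : ℝ):ℂ) ∉ lnSol N := by
  rintro ⟨-, h⟩
  have hσ2 : σ^2 = 1 := by rcases hσ with h | h <;> simp [h]
  rw [Complex.conj_ofReal] at h
  have h' : 2*σ = 2*σ/4 + ∑ j, lnEps N j/(2*σ - lnT N j) := by exact_mod_cast h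
  have e : ∀ j, lnEps N j/(2*σ - lnT N j) = (15/4)/(N+1) * (σ + Real.cos (lnTh N j)) := by
    intro j
    have hs := Real.sin_pos_of_pos_of_lt_pi (lnTh_mem N j).1 (lnTh_mem N j).2
    have hsc := Real.sin_sq_add_cos_sq (lnTh N j)
    have hne : 2*σ - lnT N j ≠ 0 := by
      intro h0
      have : Real.cos (lnTh N j) = σ := by unfold lnT at h0; linarith
      rw [this, hσ2] at hsc
      nlinarith
    rw [div_eq_iff hne]
    unfold lnEps lnT
    field_simp
    linear_combination 16*hsc - 16*hσ2
  simp_rw [e] at h'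
  rw [← Finset.mul_sum, Finset.sum_add_distrib, ln_sumcos, Finset.sum_const, Finset.card_univ, Fintype.card_fin, nsmul_eq_mul] at h'
  field_simp at h'
  have hN1 : (1:ℝ) ≤ N := by exact_mod_cast hN
  rcases hσ with rfl | rfl <;> nlinarith

def lnD : Set ℂ := {ζ | 1 < ‖ζ‖ ∨ (‖ζ‖ = 1 ∧ 0 < ζ.im)}

lemma ln_conj_inv (ζ : ℂ) (h : ‖ζ‖ = 1) : ζ⁻¹ = (starRingEnd ℂ) ζ := by
  apply inv_eq_of_mul_eq_one_right
  rw [Complex.mul_conj']; simp [h]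

lemma lnD_ne (ζ : ℂ) (h : ζ ∈ lnD) : ζ ≠ 0 := by
  rintro rfl
  rcases h with h | h <;> simp at h
  linarith

lemma ln_Jinj : Set.InjOn (fun ζ : ℂ => ζ + ζ⁻¹) lnD := by
  intro a ha b hb h
  have ha0 := lnD_ne a ha
  have hb0 := lnD_ne b hb
  have h1 : (a - b)*(a*b-1) = 0 := by
    have h2 : a + a⁻¹ = b + b⁻¹ := h
    have e : (a - b)*(a*b-1) = a*b*((a+a⁻¹)-(b+b⁻¹)) := by field_simp; ring
    rw [e, h2]; ring
  rcases mul_eq_zero.1 h1 with h2 | h2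
  · exact sub_eq_zero.1 h2
  · exfalso
    have h3 : a*b = 1 := sub_eq_zero.1 h2
    have h4 : ‖a‖*‖b‖ = 1 := by rw [← norm_mul, h3, norm_one]
    have hb1 : b = a⁻¹ := eq_inv_of_mul_eq_one_right h3
    rcases ha with ha | ⟨ha, ha'⟩ <;> rcases hb with hb | ⟨hb, hb'⟩
    · nlinarith
    · rw [hb] at h4; linarith
    · rw [ha] at h4; linarith
    · rw [hb1, ln_conj_inv a ha, Complex.conj_im] at hb'
      linarith

lemma ln_Jsurj (w : ℂ) (h2 : w ≠ ((2*1:ℝ):ℂ)) (h2' : w ≠ ((2*(-1):ℝ):ℂ)) : ∃ ζ ∈ lnD, ζ + ζ⁻¹ = w := by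
  obtain ⟨s, hs⟩ := IsAlgClosed.exists_pow_nat_eq (w^2-4) (n := 2) (by norm_num)
  set ζ := (w + s)/2 with hζ
  have h1 : ζ * (w - ζ) = 1 := by rw [hζ]; linear_combination (-1/4)*hs
  have h0 : ζ ≠ 0 := by intro h; rw [h] at h1; simp at h1
  have hw : ζ + ζ⁻¹ = w := by
    rw [← eq_inv_of_mul_eq_one_right h1]; ring
  rcases lt_trichotomy ‖ζ‖ 1 with h | h | h
  · refine ⟨ζ⁻¹, Or.inl ?_, by rw [inv_inv, add_comm]; exact hw⟩
    rw [norm_inv]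
    exact (one_lt_inv₀ (norm_pos_iff.2 h0)).2 h
  · rcases lt_trichotomy ζ.im 0 with h' | h' | h'
    · refine ⟨ζ⁻¹, Or.inr ⟨by rw [norm_inv, h, inv_one], ?_⟩, by rw [inv_inv, add_comm]; exact hw⟩
      rw [ln_conj_inv ζ h, Complex.conj_im]; linarith
    · exfalso
      have e : ζ = (ζ.re : ℂ) := by apply Complex.ext <;> simp [h']
      rw [e, Complex.norm_real, Real.norm_eq_abs] at h
      rcases eq_or_eq_neg_of_abs_eq h with h3 | h3
      · rw [h3] at e
        apply h2; rw [← hw, e]; norm_num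
      · rw [h3] at e
        apply h2'; rw [← hw, e]; norm_num
    · exact ⟨ζ, Or.inr ⟨h, h'⟩, hw⟩
  · exact ⟨ζ, Or.inl h, hw⟩

lemma ln_rootpole (N : ℕ) (ζ : ℂ) (hD : ζ ∈ lnD) (hZ : ζ^(2*N+2) = 1) : ∃ j, ζ + ζ⁻¹ = (lnT N j : ℂ) := by
  have hn : ‖ζ‖ = 1 := by
    have := congrArg norm hZ
    rw [norm_pow, norm_one] at this
    exact (pow_eq_one_iff_of_nonneg (norm_nonneg _) (by omega)).1 this
  have him : 0 < ζ.im := by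
    rcases hD with h | h
    · linarith
    · exact h.2
  have : NeZero (2*N+2) := ⟨by omega⟩
  obtain ⟨k, hk, hk'⟩ := (Complex.isPrimitiveRoot_exp (2*N+2) (by omega)).eq_pow_of_pow_eq_one hZ
  have hpi := Real.pi_pos
  set θ : ℝ := k*Real.pi/(N+1) with hθ
  have hN0 : (N:ℂ)+1 ≠ 0 := by exact_mod_cast Nat.succ_ne_zero N
  have hζ : ζ = Complex.exp (θ*Complex.I) := by
    rw [← hk', ← Complex.exp_nat_mul, hθ]
    congr 1
    push_cast
    field_simp
  rw [hζ, Complex.exp_ofReal_mul_I_im] at him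
  have hk0 : k ≠ 0 := by
    rintro rfl
    simp [hθ] at him
  have hkn : k < N+1 := by
    by_contra hcon
    push Not at hcon
    have h1 : (N:ℝ)+1 ≤ k := by exact_mod_cast hcon
    have h2 : (k:ℝ) < 2*N+2 := by exact_mod_cast hk
    have h3 : Real.pi ≤ θ := by rw [hθ, le_div_iff₀ (by positivity)]; nlinarith
    have h4 : θ < 2*Real.pi := by rw [hθ, div_lt_iff₀ (by positivity)]; nlinarith
    have h5 := Real.sin_nonneg_of_nonneg_of_le_pi (x := θ - Real.pi) (by linarith) (by linarith)
    rw [Real.sin_sub_pi] at h5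
    linarith
  refine ⟨⟨k-1, by omega⟩, ?_⟩
  have ht : lnTh N ⟨k-1, by omega⟩ = θ := by
    simp only [lnTh, hθ]
    rw [Nat.cast_sub (by omega)]
    push_cast; ring
  rw [lnT, ht, hζ, ← Complex.exp_neg, ← neg_mul, Complex.ofReal_mul, Complex.ofReal_cos, Complex.cos]
  push_cast; ring

lemma ln_main (N : ℕ) (hN : 1 ≤ N) : (lnSol N).Finite ∧ (lnSol N).ncard = 5*N-1 := by
  obtain ⟨x1, hx1, H1⟩ := ln_rootM N
  obtain ⟨x2, hx2, H2⟩ := ln_rootP N hN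
  obtain ⟨fM, cM⟩ := ln_cardM N hN
  obtain ⟨fP, cP, cB⟩ := ln_cardP N hN
  have E1 := (H1 x1 hx1.le).2 rfl
  have E2 := (H2 x2 hx2.le).2 (Or.inr rfl)
  set r1 := Real.sqrt x1 with hr1
  set r2 := Real.sqrt x2 with hr2
  have s1 : r1^2 = x1 := Real.sq_sqrt (by linarith)
  have s2 : r2^2 = x2 := Real.sq_sqrt (by linarith)
  have g1 : 1 < r1 := Real.lt_sqrt_of_sq_lt (by linarith)
  have g2 : 1 < r2 := Real.lt_sqrt_of_sq_lt (by linarith)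
  have hne : r1 ≠ r2 := by
    intro h
    have : x1 = x2 := by rw [← s1, ← s2, h]
    rw [this] at E1
    nlinarith
  set T1 : Set ℂ := (fun u : ℂ => (r1:ℂ)*u) '' lnU N (-1) with hT1
  set T2 : Set ℂ := (fun u : ℂ => (r2:ℂ)*u) '' lnU N 1 with hT2
  set T3 : Set ℂ := {u ∈ lnU N 1 | 0 < u.im} with hT3
  have r10 : (r1:ℂ) ≠ 0 := by exact_mod_cast (by linarith : r1 ≠ 0)
  have r20 : (r2:ℂ) ≠ 0 := by exact_mod_cast (by linarith : r2 ≠ 0)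
  have nr : ∀ r : ℝ, 1 ≤ r → ∀ u : ℂ, ‖u‖ = 1 → ‖(r:ℂ)*u‖ = r := by
    intro r hr u hu
    rw [norm_mul, hu, Complex.norm_real, Real.norm_of_nonneg (by linarith), mul_one]
  have n1 : ∀ ζ ∈ T1, ‖ζ‖ = r1 := by rintro _ ⟨u, hu, rfl⟩; exact nr r1 g1.le u hu.1
  have n2 : ∀ ζ ∈ T2, ‖ζ‖ = r2 := by rintro _ ⟨u, hu, rfl⟩; exact nr r2 g2.le u hu.1
  have n3 : ∀ ζ ∈ T3, ‖ζ‖ = 1 := fun ζ h => h.1.1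
  have f1 : T1.Finite := fM.image _
  have f2 : T2.Finite := fP.image _
  have f3 : T3.Finite := fP.subset (fun u hu => hu.1)
  have c1 : T1.ncard = 2*N := by
    rw [hT1, Set.ncard_image_of_injective _ (mul_right_injective₀ r10), cM]
  have c2 : T2.ncard = 2*N := by
    rw [hT2, Set.ncard_image_of_injective _ (mul_right_injective₀ r20), cP]
  have cT : (T1 ∪ T2 ∪ T3).ncard = 5*N-1 := by
    rw [Set.ncard_union_eq _ (f1.union f2) f3, Set.ncard_union_eq _ f1 f2, c1, c2, cB]
    · omega
    · rw [Set.disjoint_left]; intro ζ h h'; exact hne ((n1 ζ h).symm.trans (n2 ζ h'))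
    · rw [Set.disjoint_left]; rintro ζ (h | h) h'
      · linarith [n1 ζ h, n3 ζ h']
      · linarith [n2 ζ h, n3 ζ h']
  have hTD : T1 ∪ T2 ∪ T3 ⊆ lnD := by
    rintro ζ ((h | h) | h)
    · left; rw [n1 ζ h]; exact g1
    · left; rw [n2 ζ h]; exact g2
    · right; exact ⟨n3 ζ h, h.2⟩
  have hbig : ∀ ζ : ℂ, 1 < ‖ζ‖ → ζ^(2*N+2) ≠ 1 := by
    intro ζ h hZ
    have := congrArg norm hZ
    rw [norm_pow, norm_one] at this
    have := (pow_eq_one_iff_of_nonneg (norm_nonneg _) (by omega)).1 this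
    linarith
  have himg : lnSol N = (fun ζ : ℂ => ζ + ζ⁻¹) '' (T1 ∪ T2 ∪ T3) := by
    ext w
    constructor
    · intro hw
      obtain ⟨ζ, hD, rfl⟩ := ln_Jsurj w (fun h => ln_two N hN 1 (Or.inl rfl) (h ▸ hw))
        (fun h => ln_two N hN (-1) (Or.inr rfl) (h ▸ hw))
      refine ⟨ζ, ?_, rfl⟩
      have h0 := lnD_ne ζ hD
      have hZ : ζ^(2*N+2) ≠ 1 := by
        intro hZ
        obtain ⟨j, hj⟩ := ln_rootpole N ζ hD hZ
        exact hw.1 j hj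
      have hE := (ln_eqv N hN ζ h0 hZ).1 hw
      set r : ℝ := ‖ζ‖ with hr
      have hrge : 1 ≤ r := by rcases hD with h | h <;> linarith [h]
      have hr0 : (r:ℂ) ≠ 0 := by exact_mod_cast (by linarith : r ≠ 0)
      set u : ℂ := ζ/r with hu
      have hζu : ζ = r*u := by rw [hu]; field_simp
      have hun : ‖u‖ = 1 := by
        rw [hu, norm_div, Complex.norm_real, Real.norm_of_nonneg (by linarith), ← hr]
        exact div_self (by linarith)
      rw [hζu] at hE
      have hx : 1 ≤ r^2 := by nlinarith
      rcases (ln_polar N r hrge u hun).1 hE with ⟨h1, h2⟩ | ⟨h1, h2⟩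
      · rcases (H2 _ hx).1 h1 with h3 | h3
        · right
          have hr' : r = 1 := by nlinarith
          have : ζ = u := by rw [hζu, hr']; simp
          rw [← this] at h2
          refine ⟨h2, ?_⟩
          rcases hD with h | h
          · linarith
          · exact h.2
        · left; right
          refine ⟨u, h2, ?_⟩
          rw [hζu, show r = r2 by rw [hr2, ← h3, Real.sqrt_sq (by linarith)]]
      · left; left
        have h3 := (H1 _ hx).1 h1
        refine ⟨u, h2, ?_⟩
        rw [hζu, show r = r1 by rw [hr1, ← h3, Real.sqrt_sq (by linarith)]]
    · rintro ⟨ζ, hζ, rfl⟩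
      have h0 := lnD_ne ζ (hTD hζ)
      show ζ + ζ⁻¹ ∈ lnSol N
      rcases hζ with (h | h) | h
      · rw [ln_eqv N hN ζ h0 (hbig ζ (by rw [n1 ζ h]; exact g1))]
        obtain ⟨u, hu, rfl⟩ := h
        exact (ln_polar N r1 g1.le u hu.1).2 (Or.inr ⟨by rw [s1]; exact E1, hu⟩)
      · rw [ln_eqv N hN ζ h0 (hbig ζ (by rw [n2 ζ h]; exact g2))]
        obtain ⟨u, hu, rfl⟩ := h
        exact (ln_polar N r2 g2.le u hu.1).2 (Or.inl ⟨by rw [s2]; exact E2, hu⟩)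
      · have hZ : ζ^(2*N+2) ≠ 1 := by
          intro hZ
          have h2 := h.1.2
          rw [hZ] at h2
          push_cast at h2
          have h3 : (ζ-1)*(ζ+1) = 0 := by linear_combination (-1/5)*h2
          have him := h.2
          rcases mul_eq_zero.1 h3 with h4 | h4
          · rw [sub_eq_zero.1 h4] at him; simp at him
          · rw [eq_neg_of_add_eq_zero_left h4] at him; simp at him
        rw [ln_eqv N hN ζ h0 hZ]
        have := (ln_polar N 1 le_rfl ζ h.1.1).2 (Or.inl ⟨by norm_num, h.1⟩)
        simpa using this
  refine ⟨himg ▸ ((f1.union f2).union f3).image _, ?_⟩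
  rw [himg, Set.InjOn.ncard_image (ln_Jinj.mono hTD), cT]

/-- For every `N ≥ 1` there exist a shear `0 < γ < 1`, positive masses
`ε_j` and distinct positions `z_j` such that the lensing equation
`conj z = −γ·z + Σ_j ε_j/(z − z_j)` has exactly `5N − 1` solutions. -/
theorem stmt_16 (N : ℕ) (hN : 1 ≤ N) :
    ∃ (γ : ℝ) (ε : Fin N → ℝ) (z : Fin N → ℂ),
      0 < γ ∧ γ < 1 ∧
      (∀ j, 0 < ε j) ∧ Function.Injective z ∧
      (lensSolutions N γ ε z).Finite ∧
      (lensSolutions N γ ε z).ncard = 5 * N - 1 := by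
  have himg : lensSolutions N (1/4) (lnEps N) (fun j => Complex.I * lnT N j) = (fun w : ℂ => Complex.I * w) '' lnSol N := by
    have key : ∀ w : ℂ, Complex.I * w ∈ lensSolutions N (1/4) (lnEps N) (fun j => Complex.I * lnT N j) ↔ w ∈ lnSol N := by
      intro w
      have hs : ∑ j, (lnEps N j : ℂ) / (Complex.I * w - Complex.I * lnT N j) = -Complex.I * ∑ j, (lnEps N j : ℂ)/(w - lnT N j) := by
        rw [Finset.mul_sum]
        apply Finset.sum_congr rfl
        intro j _
        rw [← mul_sub, ← Complex.inv_I]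
        simp only [div_eq_mul_inv, mul_inv]
        ring
      simp only [lensSolutions, lnSol, Set.mem_ofPred_eq, hs, map_mul, Complex.conj_I]
      refine and_congr ?_ ?_
      · simp
      · have e : -(((1/4:ℝ):ℂ))*(Complex.I*w) + -Complex.I * ∑ j, (lnEps N j : ℂ)/(w - lnT N j) = -Complex.I * (w/4 + ∑ j, (lnEps N j : ℂ)/(w - lnT N j)) := by
          push_cast; ring
        rw [e]
        exact mul_right_inj' (neg_ne_zero.2 Complex.I_ne_zero)
    ext v
    constructor
    · intro hv
      have e : Complex.I * (-Complex.I * v) = v := by linear_combination (-v) * Complex.I_sq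
      exact ⟨-Complex.I * v, (key _).1 (by rw [e]; exact hv), e⟩
    · rintro ⟨w, hw, rfl⟩
      exact (key w).2 hw
  have hinj : Function.Injective (fun w : ℂ => Complex.I * w) := mul_right_injective₀ Complex.I_ne_zero
  obtain ⟨h1, h2⟩ := ln_main N hN
  refine ⟨1/4, lnEps N, fun j => Complex.I * lnT N j, by norm_num, by norm_num, lnEps_pos N, ?_, ?_, ?_⟩
  · intro i j h
    exact lnT_inj N (Complex.ofReal_injective (hinj h))
  · rw [himg]; exact h1.image _
  · rw [himg, Set.ncard_image_of_injective _ hinj, h2]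
end

section
/- (Rational analogue of the Crofoot–Sarason conjecture) For every integer d ≥ 2 there exist coprime polynomials p, q ∈ ℂ[z] with max(deg p, deg q) = d (so r = p/q is a rational function of degree d) and 2d − 2 distinct points c₁, …, c_{2d−2} ∈ ℂ such that for each j: q(c_j) ≠ 0, p′(c_j)·q(c_j) − p(c_j)·q′(c_j) = 0 (i.e. r′(c_j) = 0), and p(c_j) = conj(c_j)·q(c_j) (i.e. r(c_j) = conj(c_j)). -/
open Polynomial

lemma exists_x (n : ℕ) (hn : 3 ≤ n) :
    ∃ x : ℝ, 1 < x ∧ x^2 * ((x^n)^2 - 1) = n * x^n * ((x^2)^2 - 1) := by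
  have hn' : (3:ℝ) ≤ n := by exact_mod_cast hn
  let h : ℝ → ℝ := fun x => ∑ i ∈ Finset.range (2*n), x^i - n * x^(n-2) * ∑ i ∈ Finset.range 4, x^i
  have hc : Continuous h := by fun_prop
  have key : ∀ x : ℝ, h x * (x-1) = x^(2*n) - 1 - n * x^(n-2) * (x^4 - 1) := by
    intro x
    simp only [h]
    rw [sub_mul, geom_sum_mul, mul_assoc, geom_sum_mul]
  have h1 : h 1 < 0 := by
    simp only [h]; simp; linarith
  have h2 : 0 < h n := by
    have h3 : 0 < h n * ((n:ℝ)-1) := by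
      rw [key]
      obtain ⟨m, rfl⟩ : ∃ m, n = m + 3 := ⟨n-3, by omega⟩
      set N : ℝ := ((m+3:ℕ):ℝ) with hN
      have e1 : N^(2*(m+3)) = N^(m+6) * N^m := by ring
      have e2 : m + 3 - 2 = m + 1 := by omega
      rw [e1, e2]
      have a1 : 1 ≤ N^m := one_le_pow₀ (by linarith)
      have a2 : 0 < N^(m+6) := by positivity
      have a3 : N^(m+2) = N^m * N^2 := by ring
      have a4 : N * N^(m+1) * (N^4-1) = N^(m+6) - N^(m+2) := by ring
      nlinarith
    exact pos_of_mul_pos_left h3 (by linarith)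
  obtain ⟨x, hx, hx0⟩ := intermediate_value_Ioo (f := h) (a := 1) (b := (n:ℝ)) (by linarith)
    hc.continuousOn ⟨h1, h2⟩
  refine ⟨x, hx.1, ?_⟩
  have := key x
  rw [hx0] at this
  obtain ⟨m, rfl⟩ : ∃ m, n = m + 2 := ⟨n-2, by omega⟩
  have e2 : m + 2 - 2 = m := by omega
  rw [e2] at this
  linear_combination -x^2 * this

lemma point_ok (n : ℕ) (hn : 3 ≤ n) (t y : ℝ) (ht : 0 < t) (hy : 0 < y)
    (hD : y^2 * y^n - 1 ≠ 0) (h1 : t * (y^2 * y^n - 1) = y^n - y^2)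
    (h2 : y^2 * ((y^n)^2 - 1) = n * y^n * ((y^2)^2 - 1))
    (z : ℂ) (hz : z^n = 1) (c : ℂ) (hc : c = z * y) :
    (C (t:ℂ) * X^(n+1) + X : ℂ[X]).eval c ≠ 0 ∧
     (derivative (X^n + C (t:ℂ))).eval c * (C (t:ℂ) * X^(n+1) + X : ℂ[X]).eval c -
      (X^n + C (t:ℂ)).eval c * (derivative (C (t:ℂ) * X^(n+1) + X : ℂ[X])).eval c = 0 ∧
     (X^n + C (t:ℂ)).eval c = (starRingEnd ℂ) c * (C (t:ℂ) * X^(n+1) + X : ℂ[X]).eval c := by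
  have hcn : c^n = ((y^n : ℝ) : ℂ) := by rw [hc, mul_pow, hz]; push_cast; ring
  have hW : 0 < y^n := by positivity
  generalize y^n = W at *
  have hzz : (starRingEnd ℂ) z * z = 1 := by
    rw [mul_comm, Complex.mul_conj, Complex.normSq_eq_norm_sq,
      Complex.norm_eq_one_of_pow_eq_one hz (by omega)]; simp
  have hz0 : z ≠ 0 := right_ne_zero_of_mul_eq_one hzz
  have hq : (C (t:ℂ) * X^(n+1) + X : ℂ[X]).eval c = z * ((y * (t * W + 1) : ℝ):ℂ) := by
    simp only [eval_add, eval_mul, eval_C, eval_X, eval_pow, pow_succ, hcn]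
    rw [hc]; push_cast; ring
  have hcrit : n * W * (t * W + 1) - (W + t) * ((n+1) * t * W + 1) = 0 := by
    have : (n * W * (t * W + 1) - (W + t) * ((n+1) * t * W + 1)) * (y^2*W-1)^2 = 0 := by
      have e : (n * W * (t * W + 1) - (W + t) * ((n+1) * t * W + 1)) * (y^2*W-1)^2
        = n * W * ((y^2*W-1)^2 - (t * (y^2*W-1))^2)
          - (W * (y^2*W-1) + t * (y^2*W-1)) * (t * (y^2*W-1) * W + (y^2*W-1)) := by ring
      rw [e, h1]
      linear_combination (-(W^2-1)) * h2
    exact (mul_eq_zero.mp this).resolve_right (pow_ne_zero _ hD)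
  refine ⟨?_, ?_, ?_⟩
  · rw [hq]
    refine mul_ne_zero hz0 ?_
    exact_mod_cast (by positivity : y * (t * W + 1) ≠ 0)
  · obtain ⟨m, rfl⟩ : ∃ m, n = m + 1 := ⟨n-1, by omega⟩
    have hcrit' := congrArg (fun r : ℝ => (r:ℂ)) hcrit
    push_cast at hcrit'
    simp
    have e3 : c^(m+1+1) = c * W := by rw [pow_succ, hcn]; ring
    have e4 : c^m * c = W := by rw [← pow_succ, hcn]
    rw [e3, hcn]
    linear_combination hcrit' + ((m:ℂ)+1) * (t * W + 1) * e4
  · rw [hq, hc, map_mul, Complex.conj_ofReal]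
    rw [hc] at hcn
    simp only [eval_add, eval_C, eval_X, eval_pow, hcn]
    have h1' := congrArg (fun r : ℝ => (r:ℂ)) h1
    push_cast at h1' ⊢
    linear_combination -h1' - (y:ℂ) * (y * (t * W + 1)) * hzz

lemma big (n : ℕ) (hn : 3 ≤ n) :
    ∃ (p q : Polynomial ℂ), q ≠ 0 ∧ IsCoprime p q ∧
      max p.natDegree q.natDegree = n + 1 ∧
      ∃ c : Fin (2 * (n + 1) - 2) → ℂ, Function.Injective c ∧
        ∀ j, q.eval (c j) ≠ 0 ∧
          (derivative p).eval (c j) * q.eval (c j) -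
            p.eval (c j) * (derivative q).eval (c j) = 0 ∧
          p.eval (c j) = (starRingEnd ℂ) (c j) * q.eval (c j) := by
  obtain ⟨x, hx, h2⟩ := exists_x n hn
  have hx0 : 0 < x := by linarith
  have hW2 : x^2 < x^n := pow_lt_pow_right₀ hx (by omega)
  have hx2 : 1 < x^2 := one_lt_pow₀ hx (by norm_num)
  have hD : 0 < x^2 * x^n - 1 := by nlinarith
  set t : ℝ := (x^n - x^2) / (x^2 * x^n - 1) with htdef
  have ht : 0 < t := div_pos (by linarith) hD
  have ht1 : t < 1 := by rw [htdef, div_lt_one hD]; nlinarith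
  have h1 : t * (x^2 * x^n - 1) = x^n - x^2 := div_mul_cancel₀ _ hD.ne'
  have htc : (t:ℂ) ≠ 0 := by exact_mod_cast ht.ne'
  have hdq : (C (t:ℂ) * X^(n+1) + X : ℂ[X]).natDegree = n + 1 := by
    compute_degree!
    simp [show n ≠ 0 by omega, htc]
  have hdp : (X^n + C (t:ℂ)).natDegree ≤ n := by compute_degree!
  refine ⟨X^n + C (t:ℂ), C (t:ℂ) * X^(n+1) + X, ?_, ?_, ?_, ?_⟩
  · intro h; rw [h] at hdq; simp at hdq
  · have : (C (t:ℂ) * X^(n+1) + X : ℂ[X]) = X * (C (t:ℂ) * X^n + 1) := by ring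
    rw [this]
    have hC : C (t:ℂ)⁻¹ * C (t:ℂ) = 1 := by rw [← C_mul, inv_mul_cancel₀ htc, C_1]
    have hs : (1 - (t:ℂ)^2) ≠ 0 := by
      exact_mod_cast (by nlinarith : (1 - t^2 : ℝ) > 0).ne'
    have hC2 : C (1 - (t:ℂ)^2)⁻¹ * (1 - C (t:ℂ)^2) = 1 := by
      rw [← C_1, ← C_pow, ← C_sub, ← C_mul, inv_mul_cancel₀ hs]
    refine IsCoprime.mul_right ⟨C (t:ℂ)⁻¹, - C (t:ℂ)⁻¹ * X^(n-1), ?_⟩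
      ⟨-C (1 - (t:ℂ)^2)⁻¹ * C (t:ℂ), C (1 - (t:ℂ)^2)⁻¹, ?_⟩
    · obtain ⟨m, rfl⟩ : ∃ m, n = m + 1 := ⟨n-1, by omega⟩
      simp only [Nat.add_sub_cancel]
      linear_combination hC
    · linear_combination hC2
  · rw [hdq]; omega
  · have hprim := Complex.isPrimitiveRoot_exp n (by omega)
    set ω := Complex.exp (2 * Real.pi * Complex.I / n) with hω
    have hωn : ‖ω‖ = 1 := Complex.norm_eq_one_of_pow_eq_one hprim.pow_eq_one (by omega)
    let Y : ℕ → ℝ := fun k => if k < n then x else x⁻¹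
    have hinv : x⁻¹ < 1 := inv_lt_one_of_one_lt₀ hx
    have hYpos : ∀ k, 0 < Y k := by intro k; simp only [Y]; split_ifs <;> positivity
    refine ⟨fun k => ω^(k:ℕ) * (Y k : ℂ), ?_, ?_⟩
    · intro i j hij
      simp only at hij
      have hn1 := congrArg norm hij
      simp only [norm_mul, norm_pow, hωn, one_pow, one_mul, Complex.norm_real,
        Real.norm_eq_abs, abs_of_pos (hYpos _)] at hn1
      rw [hn1] at hij
      have hij' := mul_right_cancel₀ (by exact_mod_cast (hYpos _).ne') hij
      have hmod : (i:ℕ) % n = (j:ℕ) % n := by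
        refine hprim.pow_inj (Nat.mod_lt _ (by omega)) (Nat.mod_lt _ (by omega)) ?_
        have e := hprim.eq_orderOf
        have e1 := pow_mod_orderOf ω (i:ℕ)
        have e2 := pow_mod_orderOf ω (j:ℕ)
        rw [← e] at e1 e2
        rw [e1, e2, hij']
      have hi := i.2
      have hj := j.2
      ext
      have key : (i:ℕ) < n ↔ (j:ℕ) < n := by
        simp only [Y] at hn1
        split_ifs at hn1 with a b b
        · tauto
        · linarith
        · linarith
        · tauto
      by_cases a : (i:ℕ) < n
      · rwa [Nat.mod_eq_of_lt a, Nat.mod_eq_of_lt (key.mp a)] at hmod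
      · have b : ¬ (j:ℕ) < n := fun h => a (key.mpr h)
        rw [Nat.mod_eq_sub_mod (by omega), Nat.mod_eq_sub_mod (a := j) (by omega),
          Nat.mod_eq_of_lt (by omega), Nat.mod_eq_of_lt (by omega)] at hmod
        omega
    · intro j
      have hzz : (ω^(j:ℕ))^n = 1 := by
        rw [← pow_mul, mul_comm, pow_mul, hprim.pow_eq_one, one_pow]
      have hWpos : 0 < x^n := by positivity
      by_cases a : (j:ℕ) < n
      · have hY : Y j = x := by simp [Y, a]
        exact point_ok n hn t x ht hx0 hD.ne' h1 h2 _ hzz _ (by simp only [hY])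
      · have hY : Y j = x⁻¹ := by simp [Y, a]
        refine point_ok n hn t x⁻¹ ht (by positivity) ?_ ?_ ?_ _ hzz _ (by simp only [hY])
        · rw [inv_pow, inv_pow, ← mul_inv]
          exact (sub_neg.mpr (inv_lt_one_of_one_lt₀ (by linarith))).ne
        · rw [inv_pow, inv_pow]
          generalize x^n = W at *
          field_simp
          linear_combination -h1
        · rw [inv_pow, inv_pow]
          generalize x^n = W at *
          field_simp
          linear_combination -h2

lemma case2 :
    ∃ (p q : Polynomial ℂ), q ≠ 0 ∧ IsCoprime p q ∧
      max p.natDegree q.natDegree = 2 ∧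
      ∃ c : Fin (2 * 2 - 2) → ℂ, Function.Injective c ∧
        ∀ j, q.eval (c j) ≠ 0 ∧
          (derivative p).eval (c j) * q.eval (c j) -
            p.eval (c j) * (derivative q).eval (c j) = 0 ∧
          p.eval (c j) = (starRingEnd ℂ) (c j) * q.eval (c j) := by
  have hdq : (X^2 + 1 : ℂ[X]).natDegree = 2 := by compute_degree!
  have hdp : (C 2 * X : ℂ[X]).natDegree ≤ 1 := by compute_degree!
  refine ⟨C 2 * X, X^2 + 1, ?_, ?_, ?_, ![1, -1], ?_, ?_⟩
  · intro h; rw [h] at hdq; simp at hdq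
  · refine ⟨-C (1/2) * X, 1, ?_⟩
    have : (C (1/2) * C 2 : ℂ[X]) = 1 := by rw [← C_mul]; norm_num
    linear_combination (-X^2) * this
  · rw [hdq]; omega
  · intro i j
    fin_cases i <;> fin_cases j <;> norm_num [Complex.ext_iff]
  · intro j
    fin_cases j <;> norm_num

lemma case3 :
    ∃ (p q : Polynomial ℂ), q ≠ 0 ∧ IsCoprime p q ∧
      max p.natDegree q.natDegree = 3 ∧
      ∃ c : Fin (2 * 3 - 2) → ℂ, Function.Injective c ∧
        ∀ j, q.eval (c j) ≠ 0 ∧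
          (derivative p).eval (c j) * q.eval (c j) -
            p.eval (c j) * (derivative q).eval (c j) = 0 ∧
          p.eval (c j) = (starRingEnd ℂ) (c j) * q.eval (c j) := by
  have hdq : (C 2 * X^3 + 1 : ℂ[X]).natDegree = 3 := by compute_degree!
  have hdp : (C 3 * X^2 : ℂ[X]).natDegree ≤ 2 := by compute_degree!
  have hprim := Complex.isPrimitiveRoot_exp 3 (by omega)
  set ω := Complex.exp (2 * Real.pi * Complex.I / (3:ℕ)) with hω
  let c : ℕ → ℂ := fun k => if k < 3 then ω^k else 0
  refine ⟨C 3 * X^2, C 2 * X^3 + 1, ?_, ?_, ?_, fun k => c k, ?_, ?_⟩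
  · intro h; rw [h] at hdq; simp at hdq
  · refine ⟨-C (2/3) * X, 1, ?_⟩
    have : (C (2/3) * C 3 : ℂ[X]) = C 2 := by rw [← C_mul]; norm_num
    linear_combination (-X^3) * this
  · rw [hdq]; omega
  · intro i j hij
    have hi := i.2
    have hj := j.2
    have h0 : ω ≠ 0 := hprim.ne_zero (by norm_num)
    ext
    simp only [c] at hij
    split_ifs at hij with a b b
    · exact hprim.pow_inj a b hij
    · exact absurd hij (pow_ne_zero _ h0)
    · exact absurd hij.symm (pow_ne_zero _ h0)
    · omega
  · intro j
    by_cases a : (j:ℕ) < 3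
    · simp only [c, a, if_true]
      have hzz : (ω^(j:ℕ))^3 = 1 := by
        rw [← pow_mul, mul_comm, pow_mul, hprim.pow_eq_one, one_pow]
      generalize ω^(j:ℕ) = z at *
      have hz2 : (starRingEnd ℂ) z * z = 1 := by
        rw [mul_comm, Complex.mul_conj, Complex.normSq_eq_norm_sq,
          Complex.norm_eq_one_of_pow_eq_one hzz (by omega)]; simp
      have hcz : (starRingEnd ℂ) z = z^2 := by
        linear_combination z^2 * hz2 - (starRingEnd ℂ) z * hzz
      simp [hzz, hcz]
      refine ⟨by norm_num, ?_, ?_⟩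
      · linear_combination (-18 * z) * hzz
      · ring
    · simp [c, a]

/-- Rational analogue of the Crofoot–Sarason conjecture: For every
`d ≥ 2` there is a rational function `r = p/q` of degree `d` with `2d − 2` distinct
finite critical fixed points of `z ↦ conj(r(z))`: points `c` with `q(c) ≠ 0`,
`r′(c) = 0` and `r(c) = conj c`. -/
theorem stmt_17 (d : ℕ) (hd : 2 ≤ d) :
    ∃ (p q : Polynomial ℂ), q ≠ 0 ∧ IsCoprime p q ∧
      max p.natDegree q.natDegree = d ∧
      ∃ c : Fin (2 * d - 2) → ℂ, Function.Injective c ∧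
        ∀ j, q.eval (c j) ≠ 0 ∧
          (derivative p).eval (c j) * q.eval (c j) -
            p.eval (c j) * (derivative q).eval (c j) = 0 ∧
          p.eval (c j) = (starRingEnd ℂ) (c j) * q.eval (c j) := by
  rcases Nat.lt_or_ge d 4 with h | h
  · interval_cases d
    · exact case2
    · exact case3
  · obtain ⟨n, rfl⟩ : ∃ n, d = n + 1 := ⟨d - 1, by omega⟩
    exact big n (by omega)
end

section
/- (Crofoot–Sarason conjecture / Geyer's theorem) For every integer d ≥ 2 there exist a polynomial p ∈ ℂ[z] of degree d and d − 1 distinct points c₁, …, c_{d−1} ∈ ℂ such that p′(c_j) = 0 and p(c_j) = conj(c_j) for all j = 1, …, d − 1. -/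
open Polynomial

section abstractpart
open Metric Set

variable {E : Type*} [NormedAddCommGroup E] [NormedSpace ℂ E]

def DiscJoin (W : Set E) (s : ℝ) (x y : E) : Prop :=
  ∃ f : ℂ → E, DifferentiableOn ℂ f (ball 0 1) ∧ (∀ z ∈ ball (0:ℂ) 1, f z ∈ W) ∧
    f 0 = x ∧ f (s : ℂ) = y

lemma disc_lip {F : ℂ → E} {R : ℝ} (hF : DifferentiableOn ℂ F (ball 0 1))
    (hR : ∀ z ∈ ball (0:ℂ) 1, ‖F z‖ ≤ R) {z w : ℂ} (hz : ‖z‖ ≤ 1/2) (hw : ‖w‖ ≤ 1/2) :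
    ‖F z - F w‖ ≤ 4 * R * ‖z - w‖ := by
  have hsub : ∀ x ∈ closedBall (0:ℂ) (1/2), closedBall x (1/4) ⊆ ball (0:ℂ) 1 := by
    intro x hx
    apply closedBall_subset_ball'
    have := mem_closedBall.1 hx
    linarith
  refine Convex.norm_image_sub_le_of_norm_deriv_le (𝕜 := ℂ) (s := closedBall 0 (1/2)) ?_ ?_
    (convex_closedBall _ _) (by simpa using hw) (by simpa using hz)
  · intro x hx
    refine (hF x ?_).differentiableAt (isOpen_ball.mem_nhds ?_) <;>
    exact hsub x hx (mem_closedBall_self (by norm_num))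
  · intro x hx
    have h := Complex.norm_deriv_le_of_forall_mem_sphere_norm_le (c := x) (R := 1/4) (C := R)
      (f := F) (by norm_num) ?_ ?_
    · linarith
    · apply DifferentiableOn.diffContOnCl
      rw [closure_ball _ (by norm_num)]
      exact hF.mono (hsub x hx)
    · intro z hz
      exact hR z (hsub x hx (sphere_subset_closedBall hz))

lemma disc_lift [CompleteSpace E] {V : E → E} {W : Set E} (hcov : IsCoveringMapOn V W)
    (hder : ∀ x, V x ∈ W → ∃ f' : E ≃L[ℂ] E, HasStrictFDerivAt V (f' : E →L[ℂ] E) x)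
    {f : ℂ → E} (hf : DifferentiableOn ℂ f (ball 0 1)) (hfW : ∀ z ∈ ball (0:ℂ) 1, f z ∈ W)
    {x' : E} (hx' : V x' = f 0) :
    ∃ F : ℂ → E, DifferentiableOn ℂ F (ball 0 1) ∧ (∀ z ∈ ball (0:ℂ) 1, V (F z) = f z) ∧
      F 0 = x' := by
  classical
  have h0 : (0:ℂ) ∈ ball (0:ℂ) 1 := by simp
  have hc := hcov.isCoveringMap_restrictPreimage
  have : ContractibleSpace (ball (0:ℂ) 1) :=
    (convex_ball (0:ℂ) 1).contractibleSpace ⟨0, h0⟩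
  have : LocallyPathConnectedSpace (ball (0:ℂ) 1) := isOpen_ball.locallyPathConnectedSpace
  let f' : C(ball (0:ℂ) 1, W) := ⟨fun z => ⟨f z, hfW z z.2⟩,
    (hf.continuousOn.domRestrict).subtype_mk _⟩
  obtain ⟨F, ⟨hF0, hF⟩, -⟩ := hc.existsUnique_continuousMap_lifts f' ⟨0, h0⟩
    ⟨x', by simpa [hx'] using hfW 0 h0⟩ (Subtype.ext hx')
  let G : ℂ → E := fun z => if h : z ∈ ball (0:ℂ) 1 then (F ⟨z, h⟩ : E) else 0
  have hGeq : ∀ z (h : z ∈ ball (0:ℂ) 1), G z = F ⟨z, h⟩ := fun z h => by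
    simp only [G, dif_pos h]
  have hVG : ∀ z ∈ ball (0:ℂ) 1, V (G z) = f z := by
    intro z hz
    rw [hGeq z hz]
    have := congrFun hF ⟨z, hz⟩
    have := congrArg Subtype.val this
    exact this
  have hGc : ContinuousOn G (ball 0 1) := by
    rw [continuousOn_iff_continuous_domRestrict]
    have : (ball (0:ℂ) 1).domRestrict G = fun z => (F z : E) := by
      ext z; simp [Set.domRestrict, hGeq z z.2]
    rw [this]
    exact continuous_subtype_val.comp F.continuous
  refine ⟨G, ?_, hVG, ?_⟩
  · intro z hz
    apply DifferentiableAt.differentiableWithinAt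
    have hnb := isOpen_ball.mem_nhds hz
    obtain ⟨g, hg⟩ := hder (G z) (by rw [hVG z hz]; exact hfW z hz)
    have hl := hg.eventually_left_inverse
    have hinv := hg.to_localInverse.hasFDerivAt.differentiableAt
    rw [hVG z hz] at hinv
    have h1 : DifferentiableAt ℂ (fun w => hg.localInverse V g (G z) (f w)) z :=
      DifferentiableAt.comp z hinv ((hf z hz).differentiableAt hnb)
    refine h1.congr_of_eventuallyEq ?_
    have h2 := (hGc.continuousAt hnb).eventually hl
    filter_upwards [h2, hnb] with w hw hwb
    rw [hVG w hwb] at hw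
    exact hw.symm
  · rw [hGeq 0 h0, hF0]

variable [StarAddMonoid E] [NormedStarGroup E] [StarModule ℂ E]

lemma disc_step [CompleteSpace E] {V : E → E} {W : Set E} (hcov : IsCoveringMapOn V W)
    (hder : ∀ x, V x ∈ W → ∃ f' : E ≃L[ℂ] E, HasStrictFDerivAt V (f' : E →L[ℂ] E) x)
    (hstar : ∀ x ∈ W, star x ∈ W) {R ε k : ℝ} (hR : ∀ x ∈ W, ‖x‖ ≤ R)
    (hm : ∀ x, V x ∈ W → ∀ y, ‖y - x‖ < ε → y ∈ W) (hε : 0 < ε)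
    (hk0 : 0 < k) (hk1 : k < 1) (hk : 4 * R * (1 - k) < ε * k)
    {s : ℝ} (hs : 0 < s) (hs2 : s ≤ 1/2) {x y x' : E} (h : DiscJoin W s x y)
    (hx' : V x' = star x) : ∃ y', V y' = star y ∧ DiscJoin W (k * s) x' y' := by
  obtain ⟨f, hf, hfW, rfl, rfl⟩ := h
  have hmem : ∀ z : ℂ, z ∈ ball (0:ℂ) 1 → star z ∈ ball (0:ℂ) 1 := by
    intro z hz; simpa using hz
  obtain ⟨F, hF, hVF, hF0⟩ := disc_lift hcov hder (f := star ∘ f ∘ star) (x' := x')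
    (by
      intro z hz
      have h1 := ((hf _ (hmem z hz)).differentiableAt (isOpen_ball.mem_nhds (hmem z hz))).star_star
      rw [star_star] at h1
      exact h1.differentiableWithinAt)
    (fun z hz => hstar _ (hfW _ (hmem z hz))) (by simp [hx'])
  have hVW : ∀ z ∈ ball (0:ℂ) 1, V (F z) ∈ W := by
    intro z hz; rw [hVF z hz]; exact hstar _ (hfW _ (hmem z hz))
  have hFR : ∀ z ∈ ball (0:ℂ) 1, ‖F z‖ ≤ R := fun z hz =>
    hR _ (hm _ (hVW z hz) _ (by simpa using hε))
  have hsn : ‖(s:ℂ)‖ = s := by simp [abs_of_pos hs]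
  have hks : 0 < k * s := by positivity
  have hksle : k * s ≤ s := by nlinarith
  have hksn : ‖((k * s : ℝ):ℂ)‖ = k * s := by
    rw [Complex.norm_real, Real.norm_of_nonneg hks.le]
  have hsb : (s:ℂ) ∈ ball (0:ℂ) 1 := by
    rw [mem_ball_zero_iff, hsn]; linarith
  have hL := disc_lip hF hFR (z := s) (w := ((k * s : ℝ) : ℂ)) (by rw [hsn]; exact hs2)
    (by rw [hksn]; linarith)
  have hsd : ‖(s:ℂ) - ((k * s : ℝ) : ℂ)‖ = s * (1 - k) := by
    rw [← Complex.ofReal_sub, Complex.norm_real, Real.norm_of_nonneg (by linarith)]; ring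
  rw [hsd] at hL
  refine ⟨F s, ?_, fun z => F z + (z / ((k * s : ℝ) : ℂ)) • (F s - F ((k * s : ℝ) : ℂ)),
    ?_, ?_, ?_, ?_⟩
  · rw [hVF _ hsb]; simp
  · apply hF.add
    apply DifferentiableOn.smul_const
    exact (differentiable_id.div_const _).differentiableOn
  · intro z hz
    refine hm _ (hVW z hz) _ ?_
    rw [add_sub_cancel_left, norm_smul, norm_div, hksn]
    have hz1 : ‖z‖ < 1 := by simpa using hz
    calc ‖z‖ / (k * s) * ‖F s - F ((k * s : ℝ) : ℂ)‖
        ≤ 1 / (k * s) * (4 * R * (s * (1 - k))) := by gcongr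
      _ = (4 * R * (1 - k)) / k := by field_simp
      _ < ε := by rw [div_lt_iff₀ hk0]; exact hk
  · simp [hF0]
  · have : (((k * s : ℝ)) : ℂ) ≠ 0 := by exact_mod_cast hks.ne'
    simp only [div_self this, one_smul]
    abel

lemma chain_step [CompleteSpace E] {V : E → E} {W : Set E} (hcov : IsCoveringMapOn V W)
    (hder : ∀ x, V x ∈ W → ∃ f' : E ≃L[ℂ] E, HasStrictFDerivAt V (f' : E →L[ℂ] E) x)
    (hstar : ∀ x ∈ W, star x ∈ W) {R ε k : ℝ} (hR : ∀ x ∈ W, ‖x‖ ≤ R)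
    (hm : ∀ x, V x ∈ W → ∀ y, ‖y - x‖ < ε → y ∈ W) (hε : 0 < ε)
    (hk0 : 0 < k) (hk1 : k < 1) (hk : 4 * R * (1 - k) < ε * k)
    {s : ℝ} (hs : 0 < s) (hs2 : s ≤ 1/2) (y : ℕ → E) (x' : E) (hx' : V x' = star (y 0)) (N : ℕ)
    (h : ∀ i < N, DiscJoin W s (y i) (y (i+1))) :
    ∃ y' : ℕ → E, y' 0 = x' ∧ (∀ i < N, DiscJoin W (k * s) (y' i) (y' (i+1))) ∧
      ∀ i ≤ N, V (y' i) = star (y i) := by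
  induction N with
  | zero => exact ⟨fun _ => x', rfl, by simp, by simp [hx']⟩
  | succ N ih =>
    obtain ⟨y', h0, h1, h2⟩ := ih (fun i hi => h i (by omega))
    obtain ⟨w, hw, hd⟩ := disc_step hcov hder hstar hR hm hε hk0 hk1 hk hs hs2 (h N (by omega))
      (h2 N le_rfl)
    refine ⟨fun i => if i ≤ N then y' i else w, by simpa using h0, ?_, ?_⟩
    · intro i hi
      rcases Nat.lt_succ_iff_lt_or_eq.1 hi with hi | rfl
      · simpa [hi.le, Nat.succ_le_iff, hi] using h1 i hi
      · simpa using hd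
    · intro i hi
      rcases Nat.le_succ_iff.1 hi with hi | rfl
      · simpa [hi] using h2 i hi
      · simpa using hw

theorem abstract_fix [FiniteDimensional ℂ E] {V : E → E} {W : Set E} (hVc : Continuous V)
    (hcov : IsCoveringMapOn V W)
    (hder : ∀ x, V x ∈ W → ∃ f' : E ≃L[ℂ] E, HasStrictFDerivAt V (f' : E →L[ℂ] E) x)
    (hstar : ∀ x ∈ W, star x ∈ W) {R ε : ℝ} (hR0 : 0 < R) (hR : ∀ x ∈ W, ‖x‖ ≤ R)
    (hm : ∀ x, V x ∈ W → ∀ y, ‖y - x‖ < ε → y ∈ W) (hε : 0 < ε)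
    (y : ℕ → E) (N : ℕ) (hN : 0 < N) (hy : ∀ i < N, DiscJoin W (1/2) (y i) (y (i+1)))
    (hyV : V (y N) = star (y 0)) : ∃ x ∈ W, V x = star x := by
  have : CompleteSpace E := FiniteDimensional.complete ℂ E
  have : ProperSpace E := FiniteDimensional.proper ℂ E
  obtain ⟨k, hk0, hk1, hk⟩ : ∃ k : ℝ, 0 < k ∧ k < 1 ∧ 4 * R * (1 - k) < ε * k := by
    refine ⟨(4 * R + ε/2) / (4 * R + ε), by positivity, ?_, ?_⟩
    · rw [div_lt_one (by positivity)]; linarith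
    · have : 0 < 4 * R + ε := by positivity
      have h1 : 1 - (4 * R + ε/2) / (4 * R + ε) = (ε/2) / (4 * R + ε) := by field_simp; ring
      rw [h1, ← mul_div_assoc (4 * R), ← mul_div_assoc ε]
      apply div_lt_div_of_pos_right _ this
      nlinarith
  have key : ∀ m : ℕ, ∃ y : ℕ → E, (∀ i < N, DiscJoin W (k^m * (1/2)) (y i) (y (i+1))) ∧
      V (y N) = star (y 0) := by
    intro m
    induction m with
    | zero => exact ⟨y, by simpa using hy, hyV⟩
    | succ m ih =>
      obtain ⟨y, h1, h2⟩ := ih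
      obtain ⟨y', h3, h4, h5⟩ := chain_step hcov hder hstar hR hm hε hk0 hk1 hk
        (s := k^m * (1/2)) (by positivity)
        (by have := pow_le_one₀ (n := m) hk0.le hk1.le; linarith) y (y N) h2 N h1
      refine ⟨y', ?_, ?_⟩
      · intro i hi
        have := h4 i hi
        rwa [← mul_assoc, ← pow_succ'] at this
      · rw [h5 N le_rfl, h3]
  have key2 : ∀ m : ℕ, ∃ x, V x ∈ W ∧ ‖V x - star x‖ ≤ N * (4 * R) * k^m := by
    intro m
    obtain ⟨y, h1, h2⟩ := key m
    have hb : ∀ i ≤ N, ‖y i - y 0‖ ≤ i * (4 * R * k^m) := by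
      intro i
      induction i with
      | zero => simp
      | succ i ih =>
        intro hi
        have h3 := ih (by omega)
        obtain ⟨f, hf, hfW, e1, e2⟩ := h1 i (by omega)
        have hp : 0 < k^m * (1/2) := by positivity
        have hnn : ‖((k^m * (1/2) : ℝ) : ℂ)‖ = k^m * (1/2) := by
          rw [Complex.norm_real, Real.norm_of_nonneg hp.le]
        have h4 := disc_lip hf (fun z hz => hR _ (hfW z hz)) (z := ((k^m * (1/2) : ℝ) : ℂ))
          (w := 0) (by
            rw [hnn]; have := pow_le_one₀ (n := m) hk0.le hk1.le; linarith) (by simp)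
        rw [e1, e2, sub_zero, hnn] at h4
        have h5 : ‖y (i+1) - y 0‖ ≤ ‖y (i+1) - y i‖ + ‖y i - y 0‖ := by
          have := norm_add_le (y (i+1) - y i) (y i - y 0)
          simpa using this
        have h6 : 0 < 4 * R * k^m := by positivity
        push_cast
        nlinarith
    refine ⟨y N, ?_, ?_⟩
    · rw [h2]
      apply hstar
      obtain ⟨f, hf, hfW, e1, e2⟩ := h1 0 hN
      rw [← e1]
      exact hfW 0 (by simp)
    · rw [h2, ← star_sub, norm_star, norm_sub_rev]
      have := hb N le_rfl
      linarith
  have hcomp : IsCompact (closure (V ⁻¹' W)) := by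
    apply IsCompact.of_isClosed_subset (isCompact_closedBall (0:E) R) isClosed_closure
    apply closure_minimal _ isClosed_closedBall
    intro x hx
    rw [mem_closedBall_zero_iff]
    exact hR _ (hm x hx x (by simpa using hε))
  have hne : (closure (V ⁻¹' W)).Nonempty := by
    obtain ⟨x, hx, -⟩ := key2 0
    exact ⟨x, subset_closure hx⟩
  obtain ⟨x, hx, hmin⟩ := hcomp.exists_isMinOn hne
    (f := fun x => ‖V x - star x‖) (by fun_prop)
  have hzero : ‖V x - star x‖ ≤ 0 := by
    have ht : Filter.Tendsto (fun m : ℕ => N * (4 * R) * k^m) Filter.atTop (nhds (N * (4*R) * 0)) :=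
      (tendsto_pow_atTop_nhds_zero_of_lt_one hk0.le hk1).const_mul _
    rw [mul_zero] at ht
    refine ge_of_tendsto' ht fun m => ?_
    obtain ⟨x', h1, h2⟩ := key2 m
    exact (hmin (subset_closure h1)).trans h2
  refine ⟨x, ?_, ?_⟩
  · obtain ⟨x', h1, h2⟩ := Metric.mem_closure_iff.1 hx ε hε
    exact hm x' h1 x (by rwa [← dist_eq_norm])
  · simpa [sub_eq_zero] using hzero

end abstractpart

section concretepart
open Metric Set Finset

variable {m : ℕ}

noncomputable def rootPoly (c : Fin m → ℂ) : ℂ[X] := ∏ k, (X - C (c k))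

noncomputable def critPoly (c : Fin m → ℂ) : ℂ[X] :=
  ∑ i ∈ range (m+1), C ((rootPoly c).coeff i / (i + 2)) * X ^ (i + 2)

noncomputable def critVal (c : Fin m → ℂ) : Fin m → ℂ := fun j => (critPoly c).eval (c j)

lemma rootPoly_natDegree (c : Fin m → ℂ) : (rootPoly c).natDegree = m := by
  simp [rootPoly]

lemma rootPoly_coeff_top (c : Fin m → ℂ) : (rootPoly c).coeff m = 1 := by
  have h : (rootPoly c).Monic := monic_prod_X_sub_C _ _
  have := h.coeff_natDegree
  rwa [rootPoly_natDegree] at this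

lemma critPoly_derivative (c : Fin m → ℂ) : derivative (critPoly c) = X * rootPoly c := by
  conv_rhs => rw [(rootPoly c).as_sum_range_C_mul_X_pow, rootPoly_natDegree]
  rw [critPoly, derivative_sum, Finset.mul_sum]
  refine Finset.sum_congr rfl fun i _ => ?_
  rw [derivative_C_mul_X_pow]
  have : ((i:ℂ) + 2) ≠ 0 := by norm_cast
  have h2 : (rootPoly c).coeff i / ((i:ℂ) + 2) * ((i + 2 : ℕ) : ℂ) = (rootPoly c).coeff i := by
    push_cast; field_simp
  rw [h2]
  simp only [Nat.add_succ_sub_one]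
  ring

lemma critPoly_eval_zero (c : Fin m → ℂ) : (critPoly c).eval 0 = 0 := by
  simp [critPoly, eval_finsetSum]

lemma critPoly_natDegree (c : Fin m → ℂ) : (critPoly c).natDegree = m + 2 := by
  apply natDegree_eq_of_le_of_coeff_ne_zero
  · refine natDegree_sum_le_of_forall_le _ _ fun i hi => ?_
    refine (natDegree_C_mul_X_pow_le _ _).trans ?_
    have := Finset.mem_range.1 hi
    omega
  · have : (critPoly c).coeff (m+2) = 1 / ((m:ℂ) + 2) := by
      rw [critPoly, finsetSum_coeff, Finset.sum_range_succ, Finset.sum_eq_zero]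
      · simp [rootPoly_coeff_top]
      · intro i hi
        have := Finset.mem_range.1 hi
        rw [coeff_C_mul_X_pow, if_neg (by omega)]
    rw [this]
    have : ((m:ℂ) + 2) ≠ 0 := by norm_cast
    exact one_div_ne_zero this

lemma contDiff_coeff (s : Finset (Fin m)) (i : ℕ) :
    ContDiff ℂ 1 (fun c : Fin m → ℂ => (∏ k ∈ s, (X - C (c k))).coeff i) := by
  classical
  induction s using Finset.induction_on generalizing i with
  | empty => simpa using contDiff_const
  | insert a s ha ih =>
    simp only [Finset.prod_insert ha, sub_mul, coeff_sub, coeff_C_mul]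
    apply ContDiff.sub
    · cases i with
      | zero => simpa using contDiff_const
      | succ i => simpa [coeff_X_mul] using ih i
    · exact (contDiff_apply ℂ ℂ a).mul (ih i)

lemma critVal_eq (c : Fin m → ℂ) (j : Fin m) : critVal c j =
    ∑ i ∈ range (m+1), (rootPoly c).coeff i / (i + 2) * (c j) ^ (i + 2) := by
  simp [critVal, critPoly, eval_finsetSum]

lemma contDiff_critVal : ContDiff ℂ 1 (critVal (m := m)) := by
  rw [contDiff_pi]
  intro j
  simp only [critVal_eq]
  apply ContDiff.sum
  intro i _
  exact ((contDiff_coeff _ i).div_const _).mul ((contDiff_apply ℂ ℂ j).pow _)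

/-- homogeneity -/
lemma critVal_smul (t : ℂ) (c : Fin m → ℂ) : critVal (t • c) = t ^ (m+2) • critVal c := by
  have h : (critPoly (t • c)).comp (C t * X) = C (t ^ (m+2)) * critPoly c := by
    rw [← sub_eq_zero]
    have hd : derivative ((critPoly (t • c)).comp (C t * X) - C (t ^ (m+2)) * critPoly c) = 0 := by
      rw [derivative_sub, derivative_comp, critPoly_derivative, derivative_C_mul (p := critPoly c),
        critPoly_derivative, derivative_C_mul, derivative_X]
      have : (rootPoly (t • c)).comp (C t * X) = C (t ^ m) * rootPoly c := by
        simp only [rootPoly, Polynomial.prod_comp, Pi.smul_apply, smul_eq_mul, sub_comp, X_comp, mul_comp, C_comp, C_mul, C_pow]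
        simp only [← mul_sub, Finset.prod_mul_distrib]
        simp
      rw [mul_comp, this, X_comp]
      simp only [C_pow]
      ring
    rw [eq_C_of_natDegree_eq_zero (derivative_eq_zero.1 hd), coeff_zero_eq_eval_zero]
    simp [critPoly_eval_zero]
  ext j
  have := congrArg (eval (c j)) h
  simpa [critVal] using this

lemma critVal_eq_zero {c : Fin m → ℂ} (h : critVal c = 0) : c = 0 := by
  by_contra hc
  obtain ⟨j, hj⟩ : ∃ j, c j ≠ 0 := by
    by_contra! hh; exact hc (funext hh)
  have hne : rootPoly c ≠ 0 := (monic_prod_X_sub_C _ _ : (rootPoly c).Monic).ne_zero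
  have hp' : derivative (critPoly c) ≠ 0 := by
    rw [critPoly_derivative]; exact mul_ne_zero X_ne_zero hne
  have hp : critPoly c ≠ 0 := by
    intro h0; apply hp'; rw [h0]; simp
  have hroot : ∀ t, (derivative (critPoly c)).IsRoot t → (critPoly c).IsRoot t := by
    intro t ht
    rw [critPoly_derivative, IsRoot.def, eval_mul, eval_X, mul_eq_zero] at ht
    rcases ht with rfl | ht
    · exact critPoly_eval_zero c
    · rw [rootPoly, eval_prod, Finset.prod_eq_zero_iff] at ht
      obtain ⟨k, -, hk⟩ := ht
      have : t = c k := by simpa [sub_eq_zero] using hk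
      rw [this]
      exact congrFun h k
  have hr0 : (derivative (critPoly c)).IsRoot 0 := by simp [critPoly_derivative]
  have hrj : (derivative (critPoly c)).IsRoot (c j) := by
    rw [critPoly_derivative, IsRoot.def, eval_mul, rootPoly, eval_prod,
      Finset.prod_eq_zero (Finset.mem_univ j) (by simp), mul_zero]
  have hle : (derivative (critPoly c)).roots + ({0, c j} : Multiset ℂ) ≤ (critPoly c).roots := by
    classical
    rw [Multiset.le_iff_count]
    intro t
    rw [Multiset.count_add, count_roots, count_roots]
    by_cases ht : (derivative (critPoly c)).IsRoot t
    · rw [derivative_rootMultiplicity_of_root (hroot t ht)]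
      have h1 := (rootMultiplicity_pos hp).2 (hroot t ht)
      have h2 : Multiset.count t ({0, c j} : Multiset ℂ) ≤ 1 := by
        apply Multiset.nodup_iff_count_le_one.1
        simp [Ne.symm hj]
      omega
    · have h1 : Multiset.count t ({0, c j} : Multiset ℂ) = 0 := by
        rw [Multiset.count_eq_zero]
        intro hmem
        have : t = 0 ∨ t = c j := by simpa using hmem
        rcases this with rfl | rfl
        · exact ht hr0
        · exact ht hrj
      rw [rootMultiplicity_eq_zero ht, h1]
      omega
  have h1 := Multiset.card_le_card hle
  have h2 := card_roots' (critPoly c)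
  rw [critPoly_natDegree] at h2
  have h3 : Multiset.card (derivative (critPoly c)).roots = m + 1 := by
    rw [critPoly_derivative, roots_mul (by rw [← critPoly_derivative]; exact hp'), roots_X, rootPoly,
      roots_prod _ _ (Finset.prod_ne_zero_iff.2 fun k _ => X_sub_C_ne_zero (c k))]
    simp
    try omega
  rw [Multiset.card_add, h3] at h1
  simp at h1
  omega

lemma critVal_lower : ∃ η : ℝ, 0 < η ∧ ∀ c : Fin m → ℂ, η * ‖c‖ ^ (m+2) ≤ ‖critVal c‖ := by
  have hcont : Continuous (critVal (m := m)) := contDiff_critVal.continuous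
  rcases (sphere (0 : Fin m → ℂ) 1).eq_empty_or_nonempty with he | hne
  · refine ⟨1, one_pos, fun c => ?_⟩
    by_cases hc : c = 0
    · simp [hc]
    · exfalso
      have : (((‖c‖⁻¹ : ℝ) : ℂ) • c) ∈ sphere (0 : Fin m → ℂ) 1 := by
        have : ‖c‖ ≠ 0 := norm_ne_zero_iff.2 hc
        rw [mem_sphere_zero_iff_norm, norm_smul, Complex.norm_real]
        simp [this]
      rw [he] at this
      exact this
  · obtain ⟨x, hx, hmin⟩ := (isCompact_sphere (0 : Fin m → ℂ) 1).exists_isMinOn hne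
      hcont.norm.continuousOn
    have hx1 : ‖x‖ = 1 := by simpa using hx
    refine ⟨‖critVal x‖, ?_, ?_⟩
    · rw [norm_pos_iff]
      intro h
      rw [critVal_eq_zero h] at hx1
      simp at hx1
    · intro c
      by_cases hc : c = 0
      · simp [hc]
      have hc' : ‖c‖ ≠ 0 := norm_ne_zero_iff.2 hc
      have hmem : (((‖c‖⁻¹ : ℝ) : ℂ) • c) ∈ sphere (0 : Fin m → ℂ) 1 := by
        rw [mem_sphere_zero_iff_norm, norm_smul, Complex.norm_real]
        simp [hc']
      have h1 : ‖critVal x‖ ≤ ‖critVal (((‖c‖⁻¹ : ℝ) : ℂ) • c)‖ := hmin hmem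
      rw [critVal_smul, norm_smul, norm_pow, Complex.norm_real, Real.norm_of_nonneg (by positivity),
        inv_pow] at h1
      have : 0 < ‖c‖ ^ (m+2) := by positivity
      rwa [inv_mul_eq_div, le_div_iff₀ this] at h1

/-- derivative invertible at distinct nonzero points -/
lemma critVal_strict {c : Fin m → ℂ} (h0 : ∀ j, c j ≠ 0) (hinj : Function.Injective c) :
    ∃ f' : (Fin m → ℂ) ≃L[ℂ] (Fin m → ℂ),
      HasStrictFDerivAt critVal (f' : (Fin m → ℂ) →L[ℂ] (Fin m → ℂ)) c := by
  have hs := contDiff_critVal.contDiffAt.hasStrictFDerivAt (x := c) one_ne_zero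
  have hinj' : Function.Injective (fderiv ℂ (critVal (m := m)) c) := by
    rw [injective_iff_map_eq_zero]
    intro v hv
    -- derivative of coefficients
    set a : ℕ → (Fin m → ℂ) → ℂ := fun i c => (rootPoly c).coeff i with ha
    have had : ∀ i, HasFDerivAt (a i) (fderiv ℂ (a i) c) c := fun i =>
      ((contDiff_coeff Finset.univ i).differentiable one_ne_zero c).hasFDerivAt
    set b : ℕ → ℂ := fun i => fderiv ℂ (a i) c v with hb
    have hbm : b m = 0 := by
      have : a m = fun _ => 1 := by ext c; exact rootPoly_coeff_top c
      simp [hb, this]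
    -- product rule identity
    have hprod : ∀ z : ℂ, ∑ i ∈ range m, b i * z ^ i =
        - ∑ j, (∏ k ∈ Finset.univ.erase j, (z - c k)) * v j := by
      intro z
      have e1 : HasFDerivAt (fun c : Fin m → ℂ => ∑ i ∈ range (m+1), a i c * z ^ i)
          (∑ i ∈ range (m+1), (z^i) • fderiv ℂ (a i) c) c := by
        apply HasFDerivAt.fun_sum
        intro i _
        exact (had i).mul_const _
      have e2 : HasFDerivAt (fun c : Fin m → ℂ => ∏ k, (z - c k))
          (∑ j, (∏ k ∈ Finset.univ.erase j, (z - c k)) •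
            (-(ContinuousLinearMap.proj (R := ℂ) (φ := fun _ : Fin m => ℂ) j))) c := by
        apply HasFDerivAt.finsetProd
        intro i _
        exact (hasFDerivAt_apply i c).const_sub z
      have e3 : (fun c : Fin m → ℂ => ∑ i ∈ range (m+1), a i c * z ^ i) =
          fun c : Fin m → ℂ => ∏ k, (z - c k) := by
        ext c
        have : (rootPoly c).eval z = ∏ k, (z - c k) := by simp [rootPoly, eval_prod]
        rw [← this, eval_eq_sum_range, rootPoly_natDegree]
      rw [e3] at e1
      have e4 := congrArg (fun L => L v) (e1.unique e2)
      simp only [_root_.sum_apply, _root_.smul_apply, smul_eq_mul,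
        _root_.neg_apply, ContinuousLinearMap.proj_apply] at e4
      rw [Finset.sum_range_succ] at e4
      change ∑ i ∈ range m, z ^ i * b i + z ^ m * b m = _ at e4
      rw [hbm] at e4
      simp only [mul_zero, add_zero, mul_neg, Finset.sum_neg_distrib] at e4
      rw [← e4]
      exact Finset.sum_congr rfl fun i _ => mul_comm _ _
    have hvz : ∀ j, ∑ i ∈ range m, b i / (i + 2) * (c j) ^ i = 0 := by
      intro j
      have hz : ∑ i ∈ range (m+1), a i c * (c j) ^ i = 0 := by
        have : (rootPoly c).eval (c j) = 0 := by
          rw [rootPoly, eval_prod, Finset.prod_eq_zero (Finset.mem_univ j) (by simp)]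
        rwa [eval_eq_sum_range, rootPoly_natDegree] at this
      have d1 : HasFDerivAt (fun x => critVal x j)
          (∑ i ∈ range (m+1), ((a i c / (i + 2)) • (((i + 2 : ℕ) * c j ^ (i + 1)) •
            (ContinuousLinearMap.proj (R := ℂ) (φ := fun _ : Fin m => ℂ) j)) +
            (c j ^ (i+2)) • (((i:ℂ) + 2)⁻¹ • fderiv ℂ (a i) c))) c := by
        simp only [critVal_eq]
        apply HasFDerivAt.fun_sum
        intro i _
        refine HasFDerivAt.mul ?_ ?_
        · simp only [div_eq_mul_inv]
          exact (had i).mul_const _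
        · have := (hasFDerivAt_apply (𝕜 := ℂ) j c).pow (i+2)
          simpa using this
      have d2 := hasFDerivAt_pi'.1 hs.hasFDerivAt j
      have d3 := congrArg (fun L => L v) (d1.unique d2)
      simp only [_root_.sum_apply, _root_.smul_apply, _root_.add_apply, smul_eq_mul,
        ContinuousLinearMap.comp_apply, ContinuousLinearMap.proj_apply, hv, Pi.zero_apply] at d3
      have d4 : ∀ i ∈ range (m+1), (a i c / ((i:ℂ) + 2) * (((i + 2 : ℕ) : ℂ) * c j ^ (i + 1) * v j) +
          c j ^ (i+2) * (((i:ℂ) + 2)⁻¹ * fderiv ℂ (a i) c v)) =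
          (c j * v j) * (a i c * c j ^ i) + c j ^ 2 * (b i / (i + 2) * c j ^ i) := by
        intro i _
        have : ((i:ℂ) + 2) ≠ 0 := by norm_cast
        push_cast
        simp only [hb]
        field_simp
        ring
      rw [Finset.sum_congr rfl d4, Finset.sum_add_distrib, ← Finset.mul_sum, hz, mul_zero, zero_add,
        ← Finset.mul_sum, mul_eq_zero] at d3
      have d5 := d3.resolve_left (pow_ne_zero _ (h0 j))
      rw [Finset.sum_range_succ, hbm] at d5
      simpa using d5
    have hb0 : ∀ i ∈ range m, b i = 0 := by
      have := Matrix.eq_zero_of_forall_index_sum_pow_mul_eq_zero hinj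
        (v := fun i : Fin m => b i / ((i:ℕ) + 2)) (by
          intro j
          have := hvz j
          rw [Finset.sum_range] at this
          rw [← this]
          exact Finset.sum_congr rfl fun i _ => mul_comm _ _)
      intro i hi
      have h1 := congrFun this ⟨i, Finset.mem_range.1 hi⟩
      have : ((i:ℂ) + 2) ≠ 0 := by norm_cast
      simpa [this] using h1
    ext j
    have h1 := hprod (c j)
    rw [Finset.sum_eq_zero (fun i hi => by rw [hb0 i hi, zero_mul]), Finset.sum_eq_single j] at h1
    · have h2 : (∏ k ∈ Finset.univ.erase j, (c j - c k)) ≠ 0 := by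
        rw [Finset.prod_ne_zero_iff]
        intro k hk
        rw [sub_ne_zero]
        exact fun h => (Finset.ne_of_mem_erase hk) (hinj h.symm)
      have h3 := h1.symm
      rw [neg_eq_zero, mul_eq_zero] at h3
      exact h3.resolve_left h2
    · intro k _ hk
      rw [Finset.prod_eq_zero (i := j) (Finset.mem_erase.2 ⟨Ne.symm hk, Finset.mem_univ _⟩) (by simp),
        zero_mul]
    · simp
  let L := LinearEquiv.ofInjectiveEndo (fderiv ℂ (critVal (m := m)) c).toLinearMap hinj'
  refine ⟨L.toContinuousLinearEquiv, ?_⟩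
  have hL : ((L.toContinuousLinearEquiv : (Fin m → ℂ) ≃L[ℂ] (Fin m → ℂ)) :
      (Fin m → ℂ) →L[ℂ] (Fin m → ℂ)) = fderiv ℂ (critVal (m := m)) c := by
    ext; rfl
  rw [hL]
  exact hs

lemma critVal_isLocalHomeomorphOn {S : Set (Fin m → ℂ)}
    (hS : ∀ c, critVal c ∈ S → (∀ j, c j ≠ 0) ∧ Function.Injective c) :
    IsLocalHomeomorphOn critVal (critVal ⁻¹' S) := by
  apply IsLocalHomeomorphOn.mk
  intro c hc
  obtain ⟨f', hf'⟩ := critVal_strict (hS c hc).1 (hS c hc).2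
  exact ⟨hf'.toOpenPartialHomeomorph _, hf'.mem_toOpenPartialHomeomorph_source, fun x _ => rfl⟩

lemma critVal_proper : IsProperMap (critVal (m := m)) := by
  rw [isProperMap_iff_tendsto_cocompact]
  refine ⟨contDiff_critVal.continuous, ?_⟩
  obtain ⟨η, hη, h⟩ := critVal_lower (m := m)
  rw [← Metric.cobounded_eq_cocompact, ← tendsto_norm_atTop_iff_cobounded]
  refine Filter.tendsto_atTop_mono h ?_
  apply Filter.Tendsto.const_mul_atTop hη
  exact (Filter.tendsto_pow_atTop (by omega)).comp tendsto_norm_cobounded_atTop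

lemma critVal_covering {S : Set (Fin m → ℂ)}
    (hS : ∀ c, critVal c ∈ S → (∀ j, c j ≠ 0) ∧ Function.Injective c) :
    IsCoveringMapOn critVal S := by
  have hl := critVal_isLocalHomeomorphOn hS
  refine critVal_proper.isClosedMap.isCoveringMapOn_of_isLocalHomeomorphOn ?_ hl
  intro x hx
  refine (critVal_proper.isCompact_preimage isCompact_singleton).finite ?_
  refine .of_openPartialHomeomorph _ subset_rfl ?_
  intro e he
  obtain ⟨φ, hφ, h⟩ := hl e (by rw [Set.mem_preimage]; rw [show critVal e = x from he]; exact hx)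
  exact ⟨φ, hφ, h.symm⟩

end concretepart


section finalpart
open Metric Set

variable {m : ℕ}

def ext0 (c : Fin m → ℂ) : Fin (m+1) → ℂ := Fin.cons 0 c

lemma ext0_critVal (c : Fin m → ℂ) (i) : ext0 (critVal c) i = (critPoly c).eval (ext0 c i) := by
  refine Fin.cases ?_ (fun j => ?_) i
  · simp [ext0, critPoly_eval_zero]
  · simp [ext0, critVal]

lemma critPoly_deriv_eval (c : Fin m → ℂ) (z : ℂ) :
    (derivative (critPoly c)).eval z = ∏ k, (z - ext0 c k) := by
  rw [critPoly_derivative, Fin.prod_univ_succ]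
  simp [ext0, rootPoly, eval_prod]

lemma ext0_norm_le (c : Fin m → ℂ) (i) : ‖ext0 c i‖ ≤ ‖c‖ := by
  refine Fin.cases ?_ (fun j => ?_) i
  · simp [ext0]
  · simpa [ext0] using norm_le_pi_norm c j

lemma ext0_sub (a b : Fin m → ℂ) (i) : ext0 (a - b) i = ext0 a i - ext0 b i := by
  refine Fin.cases ?_ (fun j => ?_) i <;> simp [ext0]

lemma ext0_add (a b : Fin m → ℂ) (i) : ext0 (a + b) i = ext0 a i + ext0 b i := by
  refine Fin.cases ?_ (fun j => ?_) i <;> simp [ext0]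

lemma ext0_smul (t : ℂ) (b : Fin m → ℂ) (i) : ext0 (t • b) i = t * ext0 b i := by
  refine Fin.cases ?_ (fun j => ?_) i <;> simp [ext0]

lemma ext0_star (b : Fin m → ℂ) (i) : ext0 (star b) i = star (ext0 b i) := by
  refine Fin.cases ?_ (fun j => ?_) i <;> simp [ext0]

lemma ext0_perturb (a b : Fin m → ℂ) (i j) :
    ‖ext0 a i - ext0 a j‖ ≤ ‖ext0 b i - ext0 b j‖ + 2 * ‖b - a‖ := by
  have h1 := ext0_norm_le (b - a) i
  have h2 := ext0_norm_le (b - a) j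
  have h3 : ext0 a i - ext0 a j = (ext0 b i - ext0 b j) - (ext0 (b-a) i - ext0 (b-a) j) := by
    rw [ext0_sub, ext0_sub]; ring
  rw [h3]
  have h4 := norm_sub_le (ext0 b i - ext0 b j) (ext0 (b-a) i - ext0 (b-a) j)
  have h5 := norm_sub_le (ext0 (b-a) i) (ext0 (b-a) j)
  linarith

lemma cube_est {R : ℝ} (hR : 1 ≤ R) {c : Fin m → ℂ} (hc : ‖c‖ ≤ R) {i j : Fin (m+1)} (hij : i ≠ j) :
    ‖ext0 (critVal c) i - ext0 (critVal c) j‖ ≤ (2*R)^(m+1) * ‖ext0 c i - ext0 c j‖^3 := by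
  rw [ext0_critVal, ext0_critVal]
  set a := ext0 c i with ha
  set b := ext0 c j with hb
  have hball : ∀ k, ext0 c k ∈ closedBall (0:ℂ) R := fun k => by
    rw [mem_closedBall_zero_iff]; exact (ext0_norm_le c k).trans hc
  have hbound : ∀ z ∈ segment ℝ b a, ‖(derivative (critPoly c)).eval z‖ ≤ (2*R)^(m+1) * ‖a - b‖^2 := by
    intro z hz
    rw [critPoly_deriv_eval, norm_prod, ← Finset.mul_prod_erase _ _ (Finset.mem_univ i),
      ← Finset.mul_prod_erase _ _ (Finset.mem_erase.2 ⟨hij.symm, Finset.mem_univ j⟩)]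
    have h1 : ‖z - b‖ ≤ ‖a - b‖ := norm_sub_le_of_mem_segment hz
    have h2 : ‖z - a‖ ≤ ‖a - b‖ := by
      rw [norm_sub_rev a b]
      exact norm_sub_le_of_mem_segment (by rwa [segment_symm])
    have hzR : ‖z‖ ≤ R := by
      rw [← mem_closedBall_zero_iff]
      exact (convex_closedBall (0:ℂ) R).segment_subset (hball j) (hball i) hz
    have h3 : ∏ k ∈ (Finset.univ.erase i).erase j, ‖z - ext0 c k‖ ≤ (2*R)^(m+1) := by
      calc _ ≤ ∏ k ∈ (Finset.univ.erase i).erase j, (2*R) := by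
            apply Finset.prod_le_prod
            · intros; positivity
            · intro k _
              have := norm_sub_le z (ext0 c k)
              have := (ext0_norm_le c k).trans hc
              linarith
        _ = (2*R)^(((Finset.univ.erase i).erase j).card) := by rw [Finset.prod_const]
        _ ≤ _ := by
            apply pow_le_pow_right₀ (by linarith)
            refine (Finset.card_le_univ _).trans ?_
            simp
    calc _ ≤ ‖a - b‖ * (‖a - b‖ * (2*R)^(m+1)) := by gcongr
      _ = _ := by ring
  have := Convex.norm_image_sub_le_of_norm_hasDerivWithin_le
    (f := fun z => (critPoly c).eval z) (f' := fun z => (derivative (critPoly c)).eval z)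
    (fun z _ => ((critPoly c).hasDerivAt z).hasDerivWithinAt) hbound (convex_segment b a)
    (left_mem_segment ℝ b a) (right_mem_segment ℝ b a)
  refine this.trans (le_of_eq ?_)
  ring

def sepSet (m : ℕ) (R δ : ℝ) : Set (Fin m → ℂ) :=
  {c | ‖c‖ < R ∧ ∀ i j, i ≠ j → δ < ‖ext0 c i - ext0 c j‖}

lemma sepSet_deep {η R δ : ℝ} (hη : 0 < η) (hlow : ∀ c : Fin m → ℂ, η * ‖c‖ ^ (m+2) ≤ ‖critVal c‖)
    (hR : 2 ≤ R) (hRη : 4 ≤ η * R) (hδ : 0 < δ) (hδ2 : 8 * (2*R)^(m+1) * δ^2 ≤ 1)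
    {c : Fin m → ℂ} (hc : critVal c ∈ sepSet m R δ) :
    ‖c‖ ≤ R/2 ∧ ∀ i j, i ≠ j → 2*δ < ‖ext0 c i - ext0 c j‖ := by
  have h1 : ‖c‖ ≤ R/2 := by
    by_contra! h
    have h2 : ‖c‖^2 ≤ ‖c‖^(m+2) := pow_le_pow_right₀ (by linarith) (by omega)
    have h3 := hlow c
    have h4 := hc.1
    have h5 : (R/2)^2 ≤ ‖c‖^2 := by gcongr
    have h6 : η * (R/2)^2 ≤ η * ‖c‖^(m+2) := by gcongr; linarith
    nlinarith
  refine ⟨h1, fun i j hij => ?_⟩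
  by_contra! h
  have h2 := hc.2 i j hij
  have h3 := cube_est (by linarith) (show ‖c‖ ≤ R by linarith) hij
  have h4 : ‖ext0 c i - ext0 c j‖^3 ≤ (2*δ)^3 := by gcongr
  have h5 : (2*R)^(m+1) * ‖ext0 c i - ext0 c j‖^3 ≤ (2*R)^(m+1) * (2*δ)^3 := by gcongr
  have h6 : (2*R)^(m+1) * (2*δ)^3 = (8 * (2*R)^(m+1) * δ^2) * δ := by ring
  have h7 : (8 * (2*R)^(m+1) * δ^2) * δ ≤ 1 * δ := by gcongr
  linarith

lemma sepSet_nhd {R δ : ℝ} {x : Fin m → ℂ}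
    (hx : ‖x‖ ≤ R/2 ∧ ∀ i j, i ≠ j → 2*δ < ‖ext0 x i - ext0 x j‖) (y : Fin m → ℂ)
    (hy : ‖y - x‖ < min (R/2) (δ/2)) : y ∈ sepSet m R δ := by
  have h1 := hy.trans_le (min_le_left _ _)
  have h2 := hy.trans_le (min_le_right _ _)
  refine ⟨?_, fun i j hij => ?_⟩
  · have := norm_add_le (y - x) x
    rw [sub_add_cancel] at this
    linarith [hx.1]
  · have := ext0_perturb x y i j
    have := hx.2 i j hij
    linarith

lemma sepSet_star {R δ : ℝ} {x : Fin m → ℂ} (hx : x ∈ sepSet m R δ) : star x ∈ sepSet m R δ := by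
  refine ⟨by rw [norm_star]; exact hx.1, fun i j hij => ?_⟩
  rw [ext0_star, ext0_star, ← star_sub, norm_star]
  exact hx.2 i j hij

lemma inj_of_ext0 {c : Fin m → ℂ} (h : Function.Injective (ext0 c)) :
    (∀ j, c j ≠ 0) ∧ Function.Injective c := by
  constructor
  · intro j hj
    have : ext0 c j.succ = ext0 c 0 := by simp [ext0, hj]
    exact Fin.succ_ne_zero j (h this)
  · intro i j hij
    have : ext0 c i.succ = ext0 c j.succ := by simp [ext0, hij]
    exact Fin.succ_injective _ (h this)

lemma inj_of_sep {c : Fin m → ℂ} {δ : ℝ} (hδ : 0 ≤ δ)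
    (h : ∀ i j, i ≠ j → δ < ‖ext0 c i - ext0 c j‖) : Function.Injective (ext0 c) := by
  intro i j hij
  by_contra hne
  have := h i j hne
  rw [hij, sub_self, norm_zero] at this
  linarith

lemma bad_finite (α β : Fin m → ℂ)
    (h : ∀ i j, i ≠ j → ext0 α i ≠ ext0 α j ∨ ext0 β i ≠ ext0 β j) :
    {t : ℂ | ¬ Function.Injective (ext0 (α + t • β))}.Finite := by
  have hsub : {t : ℂ | ¬ Function.Injective (ext0 (α + t • β))} ⊆
      ⋃ i : Fin (m+1), ⋃ j : Fin (m+1), {t : ℂ | i ≠ j ∧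
        ext0 α i + t * ext0 β i = ext0 α j + t * ext0 β j} := by
    intro t ht
    simp only [Set.mem_ofPred_eq, Function.Injective] at ht
    push Not at ht
    obtain ⟨i, j, h1, h2⟩ := ht
    simp only [ext0_add, ext0_smul] at h1
    simp only [mem_iUnion]
    exact ⟨i, j, h2, h1⟩
  refine Set.Finite.subset (Set.finite_iUnion fun i => Set.finite_iUnion fun j => ?_) hsub
  apply Set.Subsingleton.finite
  rintro t ⟨hij, ht⟩ s ⟨-, hs⟩
  have h1 : (t - s) * (ext0 β i - ext0 β j) = 0 := by linear_combination ht - hs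
  rcases mul_eq_zero.1 h1 with h2 | h2
  · exact sub_eq_zero.1 h2
  · exfalso
    have h3 : ext0 β i = ext0 β j := sub_eq_zero.1 h2
    rcases h i j hij with h4 | h4
    · apply h4
      rw [h3] at ht
      exact add_right_cancel ht
    · exact h4 h3

lemma start_exists (m : ℕ) : ∃ x : Fin m → ℂ, Function.Injective (ext0 (critVal x)) := by
  set c : Fin m → ℂ := fun j => ((j:ℕ) : ℂ) + 1 with hc
  have hinj : Function.Injective (ext0 c) := by
    have : ext0 c = fun i : Fin (m+1) => ((i:ℕ) : ℂ) := by
      ext i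
      refine Fin.cases ?_ (fun j => ?_) i <;> simp [ext0, hc]
    rw [this]
    intro i j hij
    have hij2 : ((i:ℕ) : ℂ) = ((j:ℕ) : ℂ) := hij
    exact Fin.ext (by exact_mod_cast hij2)
  obtain ⟨f', hf'⟩ := critVal_strict (inj_of_ext0 hinj).1 (inj_of_ext0 hinj).2
  have hr : Set.range (critVal (m := m)) ∈ nhds (critVal c) := by
    rw [← hf'.map_nhds_eq_of_equiv]
    exact Filter.mem_of_superset (Filter.image_mem_map Filter.univ_mem) (by simp)
  have hcont : Continuous (fun t : ℂ => critVal c + t • c) := by fun_prop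
  have h0 : (fun t : ℂ => critVal c + t • c) ⁻¹' (Set.range critVal) ∈ nhds (0:ℂ) := by
    apply hcont.continuousAt.preimage_mem_nhds
    simpa using hr
  have hinf := infinite_of_mem_nhds (0:ℂ) h0
  have hfin := bad_finite (critVal c) c (fun i j hij => Or.inr (hinj.ne hij))
  obtain ⟨t, ⟨x, hx⟩, ht⟩ := (hinf.sdiff hfin).nonempty
  refine ⟨x, ?_⟩
  rw [hx]
  simpa using ht

lemma path_exists {x0 x1 : Fin m → ℂ} (h0 : Function.Injective (ext0 x0))
    (h1 : Function.Injective (ext0 x1)) : ∃ γ : ℝ → (Fin m → ℂ), Continuous γ ∧ γ 0 = x0 ∧ γ 1 = x1 ∧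
      ∀ t, Function.Injective (ext0 (γ t)) := by
  have hfin := bad_finite x0 (x1 - x0) (fun i j hij => Or.inl (h0.ne hij))
  have hpc := hfin.countable.isPathConnected_compl_of_one_lt_rank (by
    rw [Complex.rank_real_complex]; exact_mod_cast one_lt_two)
  have hj := hpc.joinedIn 0 (by simpa using h0) 1 (by simpa using h1)
  obtain ⟨p, hp⟩ := hj
  refine ⟨fun t => x0 + p.extend t • (x1 - x0), ?_, ?_, ?_, ?_⟩
  · have := p.continuous_extend
    fun_prop
  · simp
  · simp
  · intro t
    have := hp (Set.projIcc 0 1 zero_le_one t)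
    simpa [Path.extend, Set.IccExtend] using this

lemma chain_exists {x0 x1 : Fin m → ℂ} (h0 : Function.Injective (ext0 x0))
    (h1 : Function.Injective (ext0 x1)) : ∃ R0 δ0 : ℝ, 0 < δ0 ∧ ∀ R δ, R0 ≤ R → δ ≤ δ0 →
      ∃ (N : ℕ) (y : ℕ → (Fin m → ℂ)), 0 < N ∧ y 0 = x0 ∧ y N = x1 ∧
        ∀ i < N, DiscJoin (sepSet m R δ) (1/2) (y i) (y (i+1)) := by
  obtain ⟨γ, hγ, e0, e1, hinj⟩ := path_exists h0 h1
  obtain ⟨B, hB⟩ := (isCompact_Icc (a := (0:ℝ)) (b := 1)).exists_bound_of_continuousOn hγ.continuousOn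
  have hce : ∀ i, Continuous (fun t => ext0 (γ t) i) := by
    intro i
    refine Fin.cases ?_ (fun j => ?_) i
    · simpa [ext0] using continuous_const
    · simp only [ext0, Fin.cons_succ]
      exact (continuous_apply j).comp hγ
  have hsep : ∀ᶠ δ in nhdsWithin (0:ℝ) (Ioi 0), ∀ i j : Fin (m+1), i ≠ j → ∀ t ∈ Icc (0:ℝ) 1,
      δ ≤ ‖ext0 (γ t) i - ext0 (γ t) j‖ := by
    refine Filter.eventually_all.2 fun i => Filter.eventually_all.2 fun j => ?_
    by_cases hij : i = j
    · simp [hij]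
    obtain ⟨t0, ht0, hmin⟩ := (isCompact_Icc (a := (0:ℝ)) (b := 1)).exists_isMinOn ⟨0, by simp⟩
      ((hce i).sub (hce j)).norm.continuousOn
    have hpos : 0 < ‖ext0 (γ t0) i - ext0 (γ t0) j‖ := by
      rw [norm_pos_iff, sub_ne_zero]
      exact (hinj t0).ne hij
    filter_upwards [Ioo_mem_nhdsGT hpos] with δ hδ _ t ht
    exact hδ.2.le.trans (hmin ht)
  obtain ⟨δ0, hδ0, hpos⟩ := (hsep.and self_mem_nhdsWithin).exists
  have hpos : 0 < δ0 := hpos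
  refine ⟨B + 1, δ0/2, by positivity, fun R δ hR hδ => ?_⟩
  have huc := (isCompact_Icc (a := (0:ℝ)) (b := 1)).uniformContinuousOn_of_continuous hγ.continuousOn
  obtain ⟨τ, hτ, huc⟩ := Metric.uniformContinuousOn_iff.1 huc (min (1/2) (δ0/8)) (by positivity)
  obtain ⟨n, hn⟩ := exists_nat_one_div_lt hτ
  have hn1 : (0:ℝ) < (n:ℝ) + 1 := by positivity
  refine ⟨n+1, fun i => γ ((i:ℝ) / (n+1)), by omega, by simpa using e0, ?_, ?_⟩
  · push_cast
    rw [div_self hn1.ne']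
    exact e1
  intro i hi
  have hi' : (i:ℝ) + 1 ≤ n + 1 := by exact_mod_cast hi
  have m1 : (i:ℝ)/(n+1) ∈ Icc (0:ℝ) 1 := ⟨by positivity, by rw [div_le_one hn1]; linarith⟩
  have m2 : ((i+1 : ℕ):ℝ)/(n+1) ∈ Icc (0:ℝ) 1 :=
    ⟨by positivity, by rw [div_le_one hn1]; push_cast; exact hi'⟩
  have hd : dist (γ (((i+1 : ℕ):ℝ)/(n+1))) (γ ((i:ℝ)/(n+1))) < min (1/2) (δ0/8) := by
    apply huc _ m2 _ m1
    rw [Real.dist_eq]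
    have : ((i+1 : ℕ):ℝ)/(n+1) - (i:ℝ)/(n+1) = 1 / (n+1) := by push_cast; ring
    rw [this, abs_of_pos (by positivity)]
    exact hn
  have hB1 := hB _ m1
  have hs1 := fun i j hij => hδ0 i j hij _ m1
  dsimp only
  generalize γ ((i:ℝ)/(n+1)) = u at *
  generalize γ (((i+1 : ℕ):ℝ)/(n+1)) = v at *
  rw [dist_eq_norm] at hd
  have hd1 := hd.trans_le (min_le_left _ _)
  have hd2 := hd.trans_le (min_le_right _ _)
  refine ⟨fun z => u + (2*z) • (v - u), by fun_prop, ?_, by simp, by simp⟩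
  intro z hz
  have hz1 : ‖z‖ < 1 := by simpa using hz
  have hdist : ‖(2*z) • (v - u)‖ ≤ 2 * ‖v - u‖ := by
    rw [norm_smul, norm_mul, Complex.norm_ofNat]
    have := norm_nonneg (v - u)
    nlinarith
  constructor
  · have := norm_add_le u ((2*z) • (v-u))
    dsimp only
    linarith
  · intro k l hkl
    have h3 := ext0_perturb u (u + (2*z) • (v-u)) k l
    rw [add_sub_cancel_left] at h3
    have := hs1 k l hkl
    dsimp only
    linarith

lemma critVal_fix (m : ℕ) : ∃ c : Fin m → ℂ, Function.Injective (ext0 c) ∧ critVal c = star c := by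
  obtain ⟨x1, hx1⟩ := start_exists m
  have hx1' : Function.Injective (ext0 x1) := by
    intro i j hij
    apply hx1
    rw [ext0_critVal, ext0_critVal, hij]
  have hx0 : Function.Injective (ext0 (star (critVal x1))) := by
    intro i j hij
    rw [ext0_star, ext0_star] at hij
    exact hx1 (star_injective hij)
  obtain ⟨R0, δ0, hδ0, hch⟩ := chain_exists hx0 hx1'
  obtain ⟨η, hη, hlow⟩ := critVal_lower (m := m)
  set R := max (max 2 (4/η)) R0 with hRdef
  have hR2 : 2 ≤ R := (le_max_left _ _).trans (le_max_left _ _)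
  have hRη : 4 ≤ η * R := by
    have : 4/η ≤ R := (le_max_right _ _).trans (le_max_left _ _)
    rw [div_le_iff₀ hη] at this
    linarith
  have hRR0 : R0 ≤ R := le_max_right _ _
  obtain ⟨δ, hδ, hδδ0, hδ2⟩ : ∃ δ : ℝ, 0 < δ ∧ δ ≤ δ0 ∧ 8 * (2*R)^(m+1) * δ^2 ≤ 1 := by
    have hK : 1 ≤ 8 * (2*R)^(m+1) := by
      have := one_le_pow₀ (n := m+1) (show 1 ≤ 2*R by linarith)
      linarith
    set K := 8 * (2*R)^(m+1)
    have hK0 : 0 < K := by linarith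
    refine ⟨min δ0 (1/K), by positivity, min_le_left _ _, ?_⟩
    have h1 : min δ0 (1/K) ≤ 1/K := min_le_right _ _
    have h2 : 0 ≤ min δ0 (1/K) := by positivity
    calc K * (min δ0 (1/K))^2 ≤ K * (1/K)^2 := by gcongr
      _ = 1/K := by field_simp
      _ ≤ 1 := by rw [div_le_one hK0]; exact hK
  obtain ⟨N, y, hN, hy0, hyN, hy⟩ := hch R δ hRR0 hδδ0
  have hdeep := fun (c : Fin m → ℂ) (hc : critVal c ∈ sepSet m R δ) =>
    sepSet_deep hη hlow hR2 hRη hδ hδ2 hc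
  have hS : ∀ c : Fin m → ℂ, critVal c ∈ sepSet m R δ → (∀ j, c j ≠ 0) ∧ Function.Injective c :=
    fun c hc => inj_of_ext0 (inj_of_sep (by positivity) (hdeep c hc).2)
  obtain ⟨x, hx, hfix⟩ := abstract_fix (V := critVal (m := m)) (W := sepSet m R δ)
    contDiff_critVal.continuous (critVal_covering hS)
    (fun x hx => critVal_strict (hS x hx).1 (hS x hx).2) (fun x hx => sepSet_star hx)
    (R := R) (ε := min (R/2) (δ/2)) (by linarith) (fun x hx => hx.1.le)
    (fun x hx z hz => sepSet_nhd (hdeep x hx) z hz) (by have : 0 < R := by linarith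
                                                        positivity)
    y N hN hy (by rw [hyN, hy0, star_star])
  exact ⟨x, inj_of_sep hδ.le hx.2, hfix⟩

end finalpart

/-- Crofoot–Sarason conjecture / Geyer's theorem: For every `d ≥ 2`
there exist a polynomial `p` of degree `d` and `d − 1` distinct points `c_j ∈ ℂ` with
`p′(c_j) = 0` and `p(c_j) = conj(c_j)` for all `j`. -/
theorem stmt_19 (d : ℕ) (hd : 2 ≤ d) :
    ∃ p : Polynomial ℂ, p.natDegree = d ∧
      ∃ c : Fin (d - 1) → ℂ, Function.Injective c ∧
        ∀ j, (derivative p).eval (c j) = 0 ∧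
          p.eval (c j) = (starRingEnd ℂ) (c j) := by
  obtain ⟨m, rfl⟩ : ∃ m, d = m + 2 := ⟨d - 2, by omega⟩
  obtain ⟨c, hinj, hfix⟩ := critVal_fix m
  refine ⟨critPoly c, critPoly_natDegree c, (ext0 c : Fin (m+1) → ℂ), hinj, ?_⟩
  intro (j : Fin (m+1))
  constructor
  · rw [critPoly_deriv_eval]
    exact Finset.prod_eq_zero (Finset.mem_univ j) (sub_self _)
  · rw [← ext0_critVal, hfix, ext0_star]
    rfl
end
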